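/- Let (u, π, v, θ) be a smooth solution of the stationary 3D tropical climate model. Assume that as |x| → +∞: |x|^{2/3}|u(x)| → 0, |x|^{2/3}|v(x)| remains bounded, and |x|^{4/3}|θ(x)| → 0 (that is, u(x) = o(|x|^{−2/3}), v(x) = O(|x|^{−2/3}), θ(x) = o(|x|^{−4/3})). Then u = 0, v = 0 and θ = 0 identically on ℝ³. -/

import Mathlib

open MeasureTheory Filter Metric

noncomputable section

abbrev R3 : Type := EuclideanSpace ℝ (Fin 3)

/-- Partial derivative of `f` in the `j`-th coordinate direction. -/
def pd (f : R3 → ℝ) (j : Fin 3) (x : R3) : ℝ :=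
  fderiv ℝ f x (EuclideanSpace.single j 1)

/-- Laplacian of `f`. -/
def lap (f : R3 → ℝ) (x : R3) : ℝ := ∑ j, pd (pd f j) j x

/-- The stationary 3D tropical climate model:
`-Δu + (u·∇)u + ∇π + div(v⊗v) = 0`, `-Δv + (u·∇)v + ∇θ + (v·∇)u = 0`,
`-Δθ + u·∇θ + div v = 0`, `div u = 0`. -/
def TCM (u v : R3 → R3) (pr θ : R3 → ℝ) : Prop :=
  (∀ i x, -lap (fun y => u y i) x + (∑ j, u x j * pd (fun y => u y i) j x)
      + pd pr i x + (∑ j, pd (fun y => v y j * v y i) j x) = 0) ∧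
  (∀ i x, -lap (fun y => v y i) x + (∑ j, u x j * pd (fun y => v y i) j x)
      + pd θ i x + (∑ j, v x j * pd (fun y => u y i) j x) = 0) ∧
  (∀ x, -lap θ x + (∑ j, u x j * pd θ j x) + (∑ j, pd (fun y => v y j) j x) = 0) ∧
  (∀ x, (∑ j, pd (fun y => u y j) j x) = 0)

/-! Testing the system with `φ_R (u, v, θ)` for a cutoff `φ_R` gives
`|∇u|² + |∇v|² + |∇θ|² = Δ H - div (H u + (u · v + θ) v) - u · ∇π`, where
`H = (|u|² + |v|² + θ²) / 2`. The decay makes `H = o(|x|⁻¹)` and the flux `o(|x|⁻²)`, so the first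
two terms vanish in the limit.

No decay of the pressure is assumed; `∫ φ_R u · ∇π = -∫ π g` with `g = div (φ_R u)` is controlled by
duality. Split `g = ρ_R ⋆ g - (ρ_R ⋆ g - g)` with `ρ_R` a radial mollifier at scale `R`. Since `ρ_δ`
and `ρ_R` have, by Newton's theorem, the same potential outside a ball, `ρ_R - ρ_δ = Δ N` with `N`
compactly supported, so `-Δ π = ∂ᵢ ∂ⱼ (uᵢ uⱼ + vᵢ vⱼ)` bounds `∫ π Δ (N ⋆ g)` through
`‖∇² q‖₂ = ‖Δ q‖₂`, and `δ → 0`. In the term with `ρ_R ⋆ g` all derivatives fall on `ρ_R`, which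
produces the missing powers of `R⁻¹`. -/

open Asymptotics Bornology Function
open scoped Convolution

section Calculus

variable {f g : R3 → ℝ}

lemma pd_add (hf : Differentiable ℝ f) (hg : Differentiable ℝ g) (j : Fin 3) :
    pd (fun x ↦ f x + g x) j = fun x ↦ pd f j x + pd g j x :=
  funext fun x ↦ by simp [pd, fderiv_fun_add (hf x) (hg x)]

lemma pd_mul (hf : Differentiable ℝ f) (hg : Differentiable ℝ g) (j : Fin 3) :
    pd (fun x ↦ f x * g x) j = fun x ↦ f x * pd g j x + g x * pd f j x :=
  funext fun x ↦ by simp [pd, fderiv_fun_mul (hf x) (hg x)]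

lemma pd_const_mul (hf : Differentiable ℝ f) (c : ℝ) (j : Fin 3) :
    pd (fun x ↦ c * f x) j = fun x ↦ c * pd f j x :=
  funext fun x ↦ by simp [pd, fderiv_const_mul (hf x)]

lemma pd_sum {ι : Type*} (s : Finset ι) {F : ι → R3 → ℝ} (hF : ∀ i, Differentiable ℝ (F i))
    (j : Fin 3) : pd (fun x ↦ ∑ i ∈ s, F i x) j = fun x ↦ ∑ i ∈ s, pd (F i) j x :=
  funext fun x ↦ by simp [pd, fderiv_fun_sum fun i _ ↦ hF i x]

lemma pd_comp_smul (f : R3 → ℝ) (c : ℝ) (j : Fin 3) :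
    pd (fun x ↦ f (c • x)) j = fun x ↦ c * pd f j (c • x) :=
  funext fun x ↦ by simp [pd, fderiv_comp_smul]

lemma pd_comm (hf : ContDiff ℝ 2 f) (i j : Fin 3) : pd (pd f i) j = pd (pd f j) i := by
  have second_pd (i j : Fin 3) (x : R3) : pd (pd f i) j x =
      fderiv ℝ (fderiv ℝ f) x (EuclideanSpace.single j 1) (EuclideanSpace.single i 1) := by
    have hd : DifferentiableAt ℝ (fderiv ℝ f) x :=
      (hf.fderiv_right (m := 1) (by norm_num)).differentiable one_ne_zero x
    change fderiv ℝ (fun y ↦ fderiv ℝ f y (EuclideanSpace.single i 1)) x _ = _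
    simp [fderiv_clm_apply hd (differentiableAt_const _)]
  funext x
  rw [second_pd, second_pd]
  exact hf.contDiffAt.isSymmSndFDerivAt (by simp) _ _

lemma contDiff_pd {m n : WithTop ℕ∞} (hf : ContDiff ℝ n f) (hmn : m + 1 ≤ n) (j : Fin 3) :
    ContDiff ℝ m (pd f j) :=
  (hf.fderiv_right hmn).clm_apply contDiff_const

lemma continuous_pd (hf : ContDiff ℝ 1 f) (j : Fin 3) : Continuous (pd f j) :=
  (contDiff_pd (m := 0) hf (by simp) j).continuous

lemma contDiff_lap {m n : WithTop ℕ∞} (hf : ContDiff ℝ n f) (hmn : m + 2 ≤ n) :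
    ContDiff ℝ m (lap f) :=
  ContDiff.sum fun j _ ↦ contDiff_pd (contDiff_pd hf (by rwa [add_assoc, one_add_one_eq_two]) j)
    le_rfl j

lemma continuous_lap (hf : ContDiff ℝ 2 f) : Continuous (lap f) :=
  (contDiff_lap (m := 0) hf (by simp)).continuous

lemma support_pd_subset_tsupport (f : R3 → ℝ) (j : Fin 3) : support (pd f j) ⊆ tsupport f :=
  fun x hx ↦ support_fderiv_subset ℝ fun h : fderiv ℝ f x = 0 ↦ hx (by simp [pd, h])

lemma hasCompactSupport_pd (hf : HasCompactSupport f) (j : Fin 3) : HasCompactSupport (pd f j) :=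
  hf.fderiv_apply ℝ _

lemma hasCompactSupport_lap (hf : HasCompactSupport f) : HasCompactSupport (lap f) :=
  hf.mono' fun x hx ↦ by
    obtain ⟨j, -, hj⟩ := Finset.exists_ne_zero_of_sum_ne_zero hx
    exact closure_minimal (support_pd_subset_tsupport f j) (isClosed_tsupport f)
      (support_pd_subset_tsupport _ j hj)

lemma lap_const_mul (hf : ContDiff ℝ 2 f) (c : ℝ) :
    lap (fun x ↦ c * f x) = fun x ↦ c * lap f x := by
  have hpd (j : Fin 3) : Differentiable ℝ (pd f j) :=
    (contDiff_pd (m := 1) hf (by norm_num) j).differentiable one_ne_zero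
  funext x
  simp only [lap, pd_const_mul (hf.differentiable two_ne_zero), pd_const_mul (hpd _),
    Finset.mul_sum]

lemma lap_comp_smul (hf : ContDiff ℝ 2 f) (c : ℝ) :
    lap (fun x ↦ f (c • x)) = fun x ↦ c ^ 2 * lap f (c • x) := by
  have hpd (j : Fin 3) : Differentiable ℝ fun x ↦ pd f j (c • x) :=
    ((contDiff_pd (m := 1) hf (by norm_num) j).differentiable one_ne_zero).comp
      (differentiable_id.const_smul c)
  funext x
  simp only [lap, pd_comp_smul, pd_const_mul (hpd _), Finset.mul_sum, ← mul_assoc, sq]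

end Calculus

section IntegrationByParts

variable {f g : R3 → ℝ}

lemma integrable_mul_of_hasCompactSupport (hf : Continuous f) (hg : Continuous g)
    (hc : HasCompactSupport g) : Integrable fun x ↦ f x * g x :=
  (hf.mul hg).integrable_of_hasCompactSupport hc.mul_left

lemma integral_mul_pd (hf : ContDiff ℝ 1 f) (hg : ContDiff ℝ 1 g) (hc : HasCompactSupport g)
    (j : Fin 3) : ∫ x, f x * pd g j x = -∫ x, pd f j x * g x :=
  integral_mul_fderiv_eq_neg_fderiv_mul_of_integrable
    (integrable_mul_of_hasCompactSupport (continuous_pd hf j) hg.continuous hc)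
    (integrable_mul_of_hasCompactSupport hf.continuous (continuous_pd hg j)
      (hasCompactSupport_pd hc j))
    (integrable_mul_of_hasCompactSupport hf.continuous hg.continuous hc)
    (fun x _ ↦ hf.differentiable one_ne_zero x) (fun x _ ↦ hg.differentiable one_ne_zero x)

lemma integral_mul_lap (hf : ContDiff ℝ 2 f) (hg : ContDiff ℝ 2 g) (hc : HasCompactSupport g) :
    ∫ x, f x * lap g x = ∫ x, lap f x * g x := by
  have hpd {q : R3 → ℝ} (hq : ContDiff ℝ 2 q) (j : Fin 3) : ContDiff ℝ 1 (pd q j) :=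
    contDiff_pd hq (by norm_num) j
  simp only [lap, Finset.mul_sum, Finset.sum_mul]
  rw [integral_finsetSum, integral_finsetSum]
  · refine Finset.sum_congr rfl fun j _ ↦ ?_
    rw [integral_mul_pd (hf.of_le one_le_two) (hpd hg j) (hasCompactSupport_pd hc j),
      integral_mul_pd (hpd hf j) (hg.of_le one_le_two) hc, neg_neg]
  · exact fun j _ ↦ integrable_mul_of_hasCompactSupport (continuous_pd (hpd hf j) j)
      hg.continuous hc
  · exact fun j _ ↦ integrable_mul_of_hasCompactSupport hf.continuous (continuous_pd (hpd hg j) j)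
      (hasCompactSupport_pd (hasCompactSupport_pd hc j) j)

lemma integral_hessian_sq {q : R3 → ℝ} (hq : ContDiff ℝ 3 q) (hc : HasCompactSupport q) :
    ∑ i, ∑ j, ∫ x, pd (pd q i) j x ^ 2 = ∫ x, lap q x ^ 2 := by
  have h1 (i : Fin 3) : ContDiff ℝ 2 (pd q i) := contDiff_pd hq (by norm_num) i
  have h2 (i j : Fin 3) : ContDiff ℝ 1 (pd (pd q i) j) := contDiff_pd (h1 i) (by norm_num) j
  have swap (i j : Fin 3) :
      ∫ x, pd (pd q i) j x ^ 2 = ∫ x, pd (pd q i) i x * pd (pd q j) j x := by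
    calc ∫ x, pd (pd q i) j x ^ 2
        = -∫ x, pd (pd (pd q i) j) j x * pd q i x := by
          simp only [sq]
          exact integral_mul_pd (h2 i j) ((h1 i).of_le one_le_two) (hasCompactSupport_pd hc i) j
      _ = -∫ x, pd (pd (pd q j) j) i x * pd q i x := by
          rw [pd_comm (hq.of_le (by norm_num)) i j, pd_comm (h1 j) i j]
      _ = ∫ x, pd (pd q j) j x * pd (pd q i) i x :=
          (integral_mul_pd (h2 j j) ((h1 i).of_le one_le_two) (hasCompactSupport_pd hc i) i).symm
      _ = _ := by simp only [mul_comm]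
  have hint (i j : Fin 3) : Integrable fun x ↦ pd (pd q i) i x * pd (pd q j) j x :=
    integrable_mul_of_hasCompactSupport (h2 i i).continuous (h2 j j).continuous
      (hasCompactSupport_pd (hasCompactSupport_pd hc j) j)
  simp only [swap]
  simp only [lap, sq, Finset.sum_mul_sum]
  rw [integral_finsetSum _ fun i _ ↦ integrable_finsetSum _ fun j _ ↦ hint i j]
  exact Finset.sum_congr rfl fun i _ ↦ (integral_finsetSum _ fun j _ ↦ hint i j).symm

lemma integral_pd_pd_sq_le {q : R3 → ℝ} (hq : ContDiff ℝ 3 q) (hc : HasCompactSupport q)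
    (i j : Fin 3) : ∫ x, pd (pd q i) j x ^ 2 ≤ ∫ x, lap q x ^ 2 := by
  have hnn (i j : Fin 3) : 0 ≤ ∫ x, pd (pd q i) j x ^ 2 := integral_nonneg fun x ↦ sq_nonneg _
  rw [← integral_hessian_sq hq hc]
  exact (Finset.single_le_sum (fun j _ ↦ hnn i j) (Finset.mem_univ j)).trans <|
    Finset.single_le_sum (f := fun i ↦ ∑ j, ∫ x, pd (pd q i) j x ^ 2)
      (fun i _ ↦ Finset.sum_nonneg fun j _ ↦ hnn i j) (Finset.mem_univ i)

end IntegrationByParts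

section Convolution

variable {f g : R3 → ℝ}

lemma convolution_lsmul_apply (f g : R3 → ℝ) (x : R3) : (f ⋆ g) x = ∫ t, f t * g (x - t) := by
  simp [convolution_def]

lemma convolution_lsmul_comm (f g : R3 → ℝ) : f ⋆ g = g ⋆ f := by
  funext x
  rw [← convolution_flip]
  simp [convolution_def, mul_comm]

lemma pd_convolution_right (hf : Continuous f) (hg : ContDiff ℝ 1 g) (hc : HasCompactSupport g)
    (j : Fin 3) : pd (f ⋆ g) j = f ⋆ pd g j := by
  funext x
  have h := hc.hasFDerivAt_convolution_right (ContinuousLinearMap.lsmul ℝ ℝ) (μ := volume)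
    hf.locallyIntegrable hg x
  rw [pd, h.fderiv, convolution_precompR_apply _ hf.locallyIntegrable (hc.fderiv ℝ)
    (hg.continuous_fderiv one_ne_zero)]
  rfl

lemma pd_convolution_left (hf : ContDiff ℝ 1 f) (hc : HasCompactSupport f) (hg : Continuous g)
    (j : Fin 3) : pd (f ⋆ g) j = pd f j ⋆ g := by
  rw [convolution_lsmul_comm, pd_convolution_right hg hf hc, convolution_lsmul_comm]

lemma lap_convolution_left (hf : ContDiff ℝ 2 f) (hc : HasCompactSupport f) (hg : Continuous g) :
    lap (f ⋆ g) = lap f ⋆ g := by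
  have hpd (j : Fin 3) : ContDiff ℝ 1 (pd f j) := contDiff_pd hf (by norm_num) j
  funext x
  simp only [lap, pd_convolution_left (hf.of_le one_le_two) hc hg,
    pd_convolution_left (hpd _) (hasCompactSupport_pd hc _) hg, convolution_lsmul_apply,
    Finset.sum_mul]
  refine (integral_finsetSum _ fun j _ ↦ ?_).symm
  simpa only [mul_comm] using integrable_mul_of_hasCompactSupport
    (by fun_prop : Continuous fun t ↦ g (x - t)) (continuous_pd (hpd j) j)
    (hasCompactSupport_pd (hasCompactSupport_pd hc j) j)

lemma abs_convolution_le {M : ℝ} (hf : ∀ x, |f x| ≤ M) (hg : Integrable g) (x : R3) :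
    |(f ⋆ g) x| ≤ M * ∫ y, |g y| := by
  rw [convolution_lsmul_comm, convolution_lsmul_apply, ← integral_const_mul, ← Real.norm_eq_abs]
  refine norm_integral_le_of_norm_le (hg.abs.const_mul M) (ae_of_all _ fun y ↦ ?_)
  rw [Real.norm_eq_abs, abs_mul, mul_comm]
  exact mul_le_mul_of_nonneg_right (hf _) (abs_nonneg _)

lemma support_convolution_subset_closedBall {a b : ℝ} (ha : 0 ≤ a) (hb : 0 ≤ b)
    (hf : support f ⊆ closedBall 0 a) (hg : support g ⊆ closedBall 0 b) :
    support (f ⋆ g) ⊆ closedBall 0 (a + b) := by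
  have h := Set.add_subset_add hf hg
  rw [closedBall_add_closedBall ha hb, add_zero] at h
  exact Set.Subset.trans (support_convolution_subset (ContinuousLinearMap.lsmul ℝ ℝ)) h

lemma hasCompactSupport_of_support_subset_closedBall {E : Type*} [Zero E] {F : R3 → E} {R : ℝ}
    (hF : support F ⊆ closedBall 0 R) : HasCompactSupport F :=
  HasCompactSupport.intro (isCompact_closedBall 0 R) fun _ hx ↦ of_not_not fun h ↦ hx (hF h)

lemma support_pd_subset_closedBall {R : ℝ} (hf : support f ⊆ closedBall 0 R) (j : Fin 3) :
    support (pd f j) ⊆ closedBall 0 R :=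
  (support_pd_subset_tsupport f j).trans (closure_minimal hf isClosed_closedBall)

end Convolution

section Kernel

/-- The field `x ↦ 2 b(‖x‖²) x` with `b = newtonFlux` is the smoothly truncated Newtonian field: for
`1 ≤ ‖x‖` it equals `‖x‖⁻³ x`, and it vanishes for `‖x‖² ≤ 1/2`. -/
def newtonFlux (t : ℝ) : ℝ := Real.smoothTransition (2 * t - 1) * (2 * t * √t)⁻¹

lemma contDiff_newtonFlux {n : ℕ∞} : ContDiff ℝ n newtonFlux := by
  refine contDiff_iff_contDiffAt.2 fun t ↦ ?_
  rcases lt_or_ge t (1 / 2) with h | h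
  · refine contDiffAt_const.congr_of_eventuallyEq (f := fun _ ↦ (0 : ℝ)) ?_
    filter_upwards [Iio_mem_nhds h] with s (hs : s < 1 / 2)
    simp [newtonFlux, Real.smoothTransition.zero_of_nonpos (by linarith : 2 * s - 1 ≤ 0)]
  · have ht : 0 < t := by linarith
    exact (Real.smoothTransition.contDiff.comp (by fun_prop)).contDiffAt.mul <|
      ((contDiffAt_const.mul contDiffAt_id).mul (Real.contDiffAt_sqrt ht.ne')).inv (by positivity)

lemma newtonFlux_of_one_le {t : ℝ} (ht : 1 ≤ t) : newtonFlux t = (2 * t * √t)⁻¹ := by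
  rw [newtonFlux, Real.smoothTransition.one_of_one_le (by linarith), one_mul]

/-- The divergence of the field `x ↦ 2 b(‖x‖²) x` on `ℝ³`, at a point with `‖x‖² = t`. -/
def radialDivergence (b : ℝ → ℝ) (t : ℝ) : ℝ := 6 * b t + 4 * t * deriv b t

lemma contDiff_radialDivergence {b : ℝ → ℝ} (hb : ContDiff ℝ (⊤ : ℕ∞) b) :
    ContDiff ℝ (⊤ : ℕ∞) (radialDivergence b) :=
  (contDiff_const.mul hb).add <|
    (contDiff_const.mul contDiff_id).mul (contDiff_infty_iff_deriv.1 hb).2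

lemma radialDivergence_sub {b c : ℝ → ℝ} (hb : Differentiable ℝ b) (hc : Differentiable ℝ c)
    (t : ℝ) : radialDivergence (fun s ↦ b s - c s) t =
      radialDivergence b t - radialDivergence c t := by
  simp only [radialDivergence, deriv_fun_sub (hb t) (hc t)]
  ring

lemma radialDivergence_newtonFlux {t : ℝ} (ht : 0 < t) : radialDivergence newtonFlux t =
    2 * deriv (fun s ↦ Real.smoothTransition (2 * s - 1)) t * (√t)⁻¹ := by
  have hτ : DifferentiableAt ℝ (fun s ↦ Real.smoothTransition (2 * s - 1)) t :=
    (Real.smoothTransition.contDiff (n := 1)).differentiable one_ne_zero |>.comp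
      (by fun_prop : Differentiable ℝ fun s : ℝ ↦ 2 * s - 1) t
  have hsqrt : 0 < √t := Real.sqrt_pos.2 ht
  have hsq : √t * √t = t := Real.mul_self_sqrt ht.le
  have hpow : HasDerivAt (fun s : ℝ ↦ 2 * s * √s) (3 * √t) t := by
    convert! ((hasDerivAt_id t).const_mul 2).mul (Real.hasDerivAt_sqrt ht.ne') using 1
    simp only [id]
    field_simp
    linarith
  have hflux := (hτ.hasDerivAt.mul (hpow.inv (by positivity))).deriv
  rw [radialDivergence, show deriv newtonFlux t = _ from hflux]
  simp only [newtonFlux, Pi.inv_apply]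
  generalize √t = s at *
  subst hsq
  field_simp
  ring

lemma radialDivergence_newtonFlux_nonneg {t : ℝ} (ht : 0 ≤ t) :
    0 ≤ radialDivergence newtonFlux t := by
  rcases ht.eq_or_lt with rfl | ht
  · simp [radialDivergence, newtonFlux]
  · have hmono : Monotone fun s : ℝ ↦ Real.smoothTransition (2 * s - 1) :=
      Real.smoothTransition.monotone.comp fun a b h ↦ by linarith
    have := hmono.deriv_nonneg (x := t)
    rw [radialDivergence_newtonFlux ht]
    positivity

lemma radialDivergence_newtonFlux_of_one_lt {t : ℝ} (ht : 1 < t) :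
    radialDivergence newtonFlux t = 0 := by
  have hone : (fun s ↦ Real.smoothTransition (2 * s - 1)) =ᶠ[nhds t] fun _ ↦ 1 := by
    filter_upwards [Ioi_mem_nhds ht] with s (hs : 1 < s)
    exact Real.smoothTransition.one_of_one_le (by linarith)
  rw [radialDivergence_newtonFlux (by linarith), hone.deriv_eq]
  simp

lemma exists_radialDivergence_newtonFlux_ne_zero :
    ∃ t, 0 < t ∧ radialDivergence newtonFlux t ≠ 0 := by
  set τ : ℝ → ℝ := fun s ↦ Real.smoothTransition (2 * s - 1) with hτ
  have hd : DifferentiableOn ℝ τ (Set.Ioo (1 / 2) 1) :=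
    (((Real.smoothTransition.contDiff (n := 1)).differentiable one_ne_zero).comp
      (by fun_prop)).differentiableOn
  have hc : ContinuousOn τ (Set.Icc (1 / 2) 1) :=
    (Real.smoothTransition.continuous.comp (by fun_prop)).continuousOn
  obtain ⟨t, ht, hslope⟩ := exists_deriv_eq_slope τ (by norm_num : (1 / 2 : ℝ) < 1) hc hd
  have ht0 : 0 < t := by linarith [ht.1]
  have h0 : τ (1 / 2) = 0 := Real.smoothTransition.zero_of_nonpos (by norm_num)
  have h1 : τ 1 = 1 := Real.smoothTransition.one_of_one_le (by norm_num)
  refine ⟨t, ht0, ?_⟩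
  rw [radialDivergence_newtonFlux ht0, ← hτ, hslope, h0, h1]
  have := Real.sqrt_pos.2 ht0
  positivity

lemma pd_coord (i j : Fin 3) (x : R3) : pd (fun y ↦ y i) j x = if i = j then 1 else 0 := by
  have h : HasFDerivAt (fun y : R3 ↦ y i) (EuclideanSpace.proj (𝕜 := ℝ) i : R3 →L[ℝ] ℝ) x :=
    (EuclideanSpace.proj (𝕜 := ℝ) i : R3 →L[ℝ] ℝ).hasFDerivAt
  simp [pd, h.fderiv]

lemma pd_comp_norm_sq {k : ℝ → ℝ} (hk : Differentiable ℝ k) (j : Fin 3) :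
    pd (fun x ↦ k (‖x‖ ^ 2)) j = fun x ↦ deriv k (‖x‖ ^ 2) * (2 * x j) := by
  funext x
  have h := (hk (‖x‖ ^ 2)).hasDerivAt.comp_hasFDerivAt x (hasStrictFDerivAt_norm_sq x).hasFDerivAt
  rw [pd, show fderiv ℝ (fun x : R3 ↦ k (‖x‖ ^ 2)) x = _ from h.fderiv]
  simp [EuclideanSpace.inner_single_right]

lemma lap_comp_norm_sq {k b : ℝ → ℝ} (hk : ∀ t, HasDerivAt k (b t) t) (hb : Differentiable ℝ b)
    (x : R3) : lap (fun y ↦ k (‖y‖ ^ 2)) x = radialDivergence b (‖x‖ ^ 2) := by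
  have hcoord (j : Fin 3) : Differentiable ℝ fun y : R3 ↦ 2 * y j := by fun_prop
  have hbn : Differentiable ℝ fun y : R3 ↦ b (‖y‖ ^ 2) :=
    hb.comp ((contDiff_norm_sq ℝ (n := 1)).differentiable one_ne_zero)
  have hpd (j : Fin 3) : pd (fun y ↦ k (‖y‖ ^ 2)) j = fun y ↦ b (‖y‖ ^ 2) * (2 * y j) := by
    rw [pd_comp_norm_sq fun t ↦ (hk t).differentiableAt, funext fun t ↦ (hk t).deriv]
  have hpd2 (j : Fin 3) : pd (pd (fun y ↦ k (‖y‖ ^ 2)) j) j x =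
      2 * b (‖x‖ ^ 2) + 4 * deriv b (‖x‖ ^ 2) * x j ^ 2 := by
    rw [hpd, pd_mul hbn (hcoord j), pd_comp_norm_sq hb, pd_const_mul (by fun_prop)]
    simp only [pd_coord, if_true]
    ring
  have hnorm : ‖x‖ ^ 2 = x 0 ^ 2 + x 1 ^ 2 + x 2 ^ 2 := by
    simp [EuclideanSpace.norm_sq_eq, Fin.sum_univ_three]
  simp only [lap, hpd2, Fin.sum_univ_three, radialDivergence]
  linear_combination (-4) * deriv b (‖x‖ ^ 2) * hnorm

/-- The `L¹`-normalised dilation `ρ_s(x) = s⁻³ ρ(x / s)`. -/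
def dilate (ρ : R3 → ℝ) (s : ℝ) (x : R3) : ℝ := s⁻¹ ^ 3 * ρ (s⁻¹ • x)

/-- A mollifier whose dilations differ by the Laplacian of a compactly supported function. Radial
mollifiers have this property by Newton's theorem: outside their supports, the potentials of
`ρ_R` and `ρ_δ` are both those of a point mass. -/
structure IsNewtonianMollifier (ρ : R3 → ℝ) : Prop where
  contDiff : ContDiff ℝ (⊤ : ℕ∞) ρ
  support_subset : support ρ ⊆ closedBall 0 1
  nonneg : ∀ x, 0 ≤ ρ x
  integral_eq_one : ∫ x, ρ x = 1
  exists_lap_eq : ∀ δ R : ℝ, 0 < δ → δ ≤ R → ∃ N : R3 → ℝ, ContDiff ℝ (⊤ : ℕ∞) N ∧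
    support N ⊆ closedBall 0 R ∧ ∀ x, lap N x = dilate ρ R x - dilate ρ δ x

lemma exists_primitive_newtonFlux_sub {δ R : ℝ} (hδ : 0 < δ) (hR : δ ≤ R) :
    ∃ k : ℝ → ℝ, (∀ t, R ^ 2 ≤ t → k t = 0) ∧
      ∀ t, HasDerivAt k
        (R⁻¹ ^ 3 * newtonFlux (R⁻¹ ^ 2 * t) - δ⁻¹ ^ 3 * newtonFlux (δ⁻¹ ^ 2 * t)) t := by
  set b : ℝ → ℝ := fun t ↦ R⁻¹ ^ 3 * newtonFlux (R⁻¹ ^ 2 * t) - δ⁻¹ ^ 3 * newtonFlux (δ⁻¹ ^ 2 * t)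
  have hflux : Continuous newtonFlux := (contDiff_newtonFlux (n := 0)).continuous
  have hb : Continuous b := by fun_prop
  refine ⟨fun t ↦ ∫ s in (R ^ 2)..t, b s, fun t ht ↦ ?_,
    fun t ↦ hb.integral_hasStrictDerivAt _ t |>.hasDerivAt⟩
  have point_mass (r : ℝ) (hr : 0 < r) (hrR : r ≤ R) (s : ℝ) (hs : R ^ 2 ≤ s) :
      r⁻¹ ^ 3 * newtonFlux (r⁻¹ ^ 2 * s) = (2 * s * √s)⁻¹ := by
    have hs0 : 0 < s := by nlinarith
    have h1 : 1 ≤ r⁻¹ ^ 2 * s := by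
      rw [inv_pow, inv_mul_eq_div, one_le_div (by positivity)]
      nlinarith
    rw [newtonFlux_of_one_le h1, Real.sqrt_mul (by positivity), Real.sqrt_sq (by positivity)]
    field_simp
  refine intervalIntegral.integral_zero_ae (ae_of_all _ fun s hs ↦ ?_)
  rw [Set.uIoc_of_le ht] at hs
  simp only [b, point_mass R (hδ.trans_le hR) le_rfl s hs.1.le, point_mass δ hδ hR s hs.1.le,
    sub_self]

lemma radialDivergence_comp_mul {b : ℝ → ℝ} (hb : Differentiable ℝ b) (c a t : ℝ) :
    radialDivergence (fun s ↦ c * b (a * s)) t = c * radialDivergence b (a * t) := by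
  have h : HasDerivAt (fun s ↦ c * b (a * s)) (c * (deriv b (a * t) * a)) t :=
    (((hb (a * t)).hasDerivAt).comp t (by simpa using (hasDerivAt_id t).const_mul a)).const_mul c
  rw [radialDivergence, h.deriv, radialDivergence]
  ring

lemma exists_lap_eq_sub_dilate {δ R : ℝ} (hδ : 0 < δ) (hR : δ ≤ R) :
    ∃ N : R3 → ℝ, ContDiff ℝ (⊤ : ℕ∞) N ∧ support N ⊆ closedBall 0 R ∧ ∀ x, lap N x =
      dilate (fun x ↦ radialDivergence newtonFlux (‖x‖ ^ 2)) R x -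
        dilate (fun x ↦ radialDivergence newtonFlux (‖x‖ ^ 2)) δ x := by
  obtain ⟨k, hk0, hk⟩ := exists_primitive_newtonFlux_sub hδ hR
  have hflux : ContDiff ℝ (⊤ : ℕ∞) newtonFlux := contDiff_newtonFlux
  have hscaled (s : ℝ) : ContDiff ℝ (⊤ : ℕ∞) fun t ↦ s⁻¹ ^ 3 * newtonFlux (s⁻¹ ^ 2 * t) :=
    contDiff_const.mul (hflux.comp (contDiff_const.mul contDiff_id))
  have hd {f : ℝ → ℝ} (hf : ContDiff ℝ (⊤ : ℕ∞) f) : Differentiable ℝ f :=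
    hf.differentiable (by simp)
  refine ⟨fun x ↦ k (‖x‖ ^ 2), ?_, fun x hx ↦ ?_, fun x ↦ ?_⟩
  · refine ContDiff.comp (contDiff_infty_iff_deriv.2 ⟨fun t ↦ (hk t).differentiableAt, ?_⟩)
      (contDiff_norm_sq ℝ)
    rw [funext fun t ↦ (hk t).deriv]
    exact (hscaled R).sub (hscaled δ)
  · rw [mem_closedBall_zero_iff]
    by_contra! h
    exact hx (hk0 _ (pow_le_pow_left₀ (hδ.trans_le hR).le h.le 2))
  · rw [lap_comp_norm_sq hk (hd ((hscaled R).sub (hscaled δ))),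
      radialDivergence_sub (hd (hscaled R)) (hd (hscaled δ)),
      radialDivergence_comp_mul (hd hflux), radialDivergence_comp_mul (hd hflux)]
    simp only [dilate, norm_smul, mul_pow, Real.norm_eq_abs, sq_abs]

theorem exists_isNewtonianMollifier : ∃ ρ : R3 → ℝ, IsNewtonianMollifier ρ := by
  set ρ₀ : R3 → ℝ := fun x ↦ radialDivergence newtonFlux (‖x‖ ^ 2)
  have smooth : ContDiff ℝ (⊤ : ℕ∞) ρ₀ :=
    (contDiff_radialDivergence contDiff_newtonFlux).comp (contDiff_norm_sq ℝ)
  have supp : support ρ₀ ⊆ closedBall 0 1 := fun x hx ↦ by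
    rw [mem_closedBall_zero_iff]
    by_contra! h
    exact hx (radialDivergence_newtonFlux_of_one_lt (by nlinarith))
  have nonneg (x : R3) : 0 ≤ ρ₀ x := radialDivergence_newtonFlux_nonneg (sq_nonneg _)
  have integral_pos : 0 < ∫ x, ρ₀ x := by
    obtain ⟨t, ht, hne⟩ := exists_radialDivergence_newtonFlux_ne_zero
    refine smooth.continuous.integral_pos_of_hasCompactSupport_nonneg_nonzero
      (hasCompactSupport_of_support_subset_closedBall supp) nonneg
      (x := EuclideanSpace.single 0 √t) ?_
    simpa [ρ₀, Real.sq_sqrt ht.le] using hne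
  set c := (∫ x, ρ₀ x)⁻¹
  refine ⟨fun x ↦ c * ρ₀ x, contDiff_const.mul smooth,
    (support_mul_subset_right (fun _ ↦ c) ρ₀).trans supp,
    fun x ↦ mul_nonneg (inv_nonneg.2 integral_pos.le) (nonneg x), ?_, fun δ R hδ hR ↦ ?_⟩
  · rw [integral_const_mul, inv_mul_cancel₀ integral_pos.ne']
  · obtain ⟨N, hN, hNsupp, hlap⟩ := exists_lap_eq_sub_dilate hδ hR
    refine ⟨fun x ↦ c * N x, contDiff_const.mul hN,
      (support_mul_subset_right (fun _ ↦ c) N).trans hNsupp, fun x ↦ ?_⟩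
    simp only [lap_const_mul (contDiff_infty.1 hN 2), hlap, dilate, ρ₀]
    ring

end Kernel

section Dilate

variable {ρ : R3 → ℝ} {s : ℝ}

lemma contDiff_dilate {n : WithTop ℕ∞} (hρ : ContDiff ℝ n ρ) (s : ℝ) : ContDiff ℝ n (dilate ρ s) :=
  contDiff_const.mul (hρ.comp (contDiff_const_smul s⁻¹))

lemma support_dilate_subset (hρ : support ρ ⊆ closedBall 0 1) (hs : 0 < s) :
    support (dilate ρ s) ⊆ closedBall 0 s := by
  intro x hx
  have h : s⁻¹ • x ∈ closedBall (0 : R3) 1 := hρ (right_ne_zero_of_mul hx)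
  rwa [mem_closedBall_zero_iff, norm_smul, norm_inv, Real.norm_of_nonneg hs.le, inv_mul_le_one₀ hs,
    ← mem_closedBall_zero_iff] at h

lemma integral_dilate (ρ : R3 → ℝ) (hs : 0 < s) : ∫ x, dilate ρ s x = ∫ x, ρ x := by
  simp only [dilate]
  rw [integral_const_mul, Measure.integral_comp_inv_smul_of_nonneg _ _ hs.le]
  simp [hs.ne']

lemma pd_dilate (hρ : Differentiable ℝ ρ) (s : ℝ) (j : Fin 3) :
    pd (dilate ρ s) j = fun x ↦ s⁻¹ ^ 4 * pd ρ j (s⁻¹ • x) := by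
  have h : dilate ρ s = fun x ↦ s⁻¹ ^ 3 * ρ (s⁻¹ • x) := rfl
  rw [h, pd_const_mul (by fun_prop), pd_comp_smul]
  funext x
  ring

lemma lap_dilate (hρ : ContDiff ℝ 2 ρ) (s : ℝ) :
    lap (dilate ρ s) = fun x ↦ s⁻¹ ^ 5 * lap ρ (s⁻¹ • x) := by
  have h : dilate ρ s = fun x ↦ s⁻¹ ^ 3 * ρ (s⁻¹ • x) := rfl
  rw [h, lap_const_mul (by fun_prop), lap_comp_smul hρ]
  funext x
  ring

namespace IsNewtonianMollifier

lemma integral_dilate (hρ : IsNewtonianMollifier ρ) (hs : 0 < s) :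
    ∫ x, dilate ρ s x = 1 :=
  (_root_.integral_dilate ρ hs).trans hρ.integral_eq_one

lemma dilate_nonneg (hρ : IsNewtonianMollifier ρ) (hs : 0 < s) (x : R3) :
    0 ≤ dilate ρ s x :=
  mul_nonneg (by positivity) (hρ.nonneg _)

lemma hasCompactSupport_dilate (hρ : IsNewtonianMollifier ρ) (hs : 0 < s) :
    HasCompactSupport (dilate ρ s) :=
  hasCompactSupport_of_support_subset_closedBall (support_dilate_subset hρ.support_subset hs)

lemma continuous_dilate (hρ : IsNewtonianMollifier ρ) (s : ℝ) :
    Continuous (dilate ρ s) :=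
  (contDiff_dilate hρ.contDiff s).continuous

lemma abs_dilate_convolution_le (hρ : IsNewtonianMollifier ρ) (hs : 0 < s)
    {g : R3 → ℝ} {m : ℝ} (hg : ∀ x, |g x| ≤ m) (x : R3) : |(dilate ρ s ⋆ g) x| ≤ m := by
  have h := abs_convolution_le hg
    ((hρ.continuous_dilate s).integrable_of_hasCompactSupport (hρ.hasCompactSupport_dilate hs)) x
  simp only [abs_of_nonneg (hρ.dilate_nonneg hs _), hρ.integral_dilate hs, mul_one] at h
  rwa [convolution_lsmul_comm]

lemma tendsto_dilate_convolution (hρ : IsNewtonianMollifier ρ) {g : R3 → ℝ}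
    (hg : Continuous g) (x : R3) :
    Tendsto (fun s ↦ (dilate ρ s ⋆ g) x) (nhdsWithin 0 (Set.Ioi 0)) (nhds (g x)) := by
  refine convolution_tendsto_right (k := fun _ ↦ x) (g := fun _ ↦ g) ?_ ?_ ?_
    (Eventually.of_forall fun _ ↦ hg.aestronglyMeasurable)
    ((hg.tendsto x).comp tendsto_snd) tendsto_const_nhds
  · exact eventually_mem_nhdsWithin.mono fun s hs ↦ hρ.dilate_nonneg hs
  · exact eventually_mem_nhdsWithin.mono fun s hs ↦ hρ.integral_dilate hs
  · refine tendsto_smallSets_iff.2 fun t ht ↦ ?_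
    obtain ⟨r, hr, hrt⟩ := Metric.nhds_basis_closedBall.mem_iff.1 ht
    filter_upwards [Ioo_mem_nhdsGT hr] with s hs
    exact (support_dilate_subset hρ.support_subset hs.1).trans
      ((closedBall_subset_closedBall hs.2.le).trans hrt)

end IsNewtonianMollifier

end Dilate

section IntegralBounds

variable {f g : R3 → ℝ} {R : ℝ}

lemma integrableOn_closedBall (hf : Continuous f) (R : ℝ) : IntegrableOn f (closedBall 0 R) :=
  hf.continuousOn.integrableOn_compact (isCompact_closedBall 0 R)

lemma setIntegral_closedBall_eq_integral (hf : support f ⊆ closedBall 0 R) :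
    ∫ x in closedBall 0 R, f x = ∫ x, f x :=
  setIntegral_eq_integral_of_forall_compl_eq_zero fun _ hx ↦ of_not_not fun h ↦ hx (hf h)

lemma abs_integral_mul_le {M : ℝ} (hf : Continuous f) (hg : support g ⊆ closedBall 0 R)
    (hM : ∀ x, |g x| ≤ M) : |∫ x, f x * g x| ≤ M * ∫ x in closedBall 0 R, |f x| := by
  rw [← setIntegral_closedBall_eq_integral ((support_mul_subset_right f g).trans hg),
    ← integral_const_mul, ← Real.norm_eq_abs]
  refine norm_integral_le_of_norm_le ((integrableOn_closedBall hf R).abs.const_mul M)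
    (ae_of_all _ fun x ↦ ?_)
  rw [Real.norm_eq_abs, abs_mul, mul_comm]
  exact mul_le_mul_of_nonneg_right (hM x) (abs_nonneg _)

lemma abs_integral_mul_le_sqrt_mul_sqrt (hf : Continuous f) (hg : Continuous g)
    (hgR : support g ⊆ closedBall 0 R) :
    |∫ x, f x * g x| ≤ √(∫ x in closedBall 0 R, f x ^ 2) * √(∫ x, g x ^ 2) := by
  have hgR2 : support (fun x ↦ g x ^ 2) ⊆ closedBall 0 R :=
    fun x hx ↦ hgR (by simpa using hx)
  have memLp {h : R3 → ℝ} (hh : Continuous h) :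
      MemLp h (ENNReal.ofReal 2) (volume.restrict (closedBall 0 R)) := by
    rw [ENNReal.ofReal_ofNat]
    exact (memLp_two_iff_integrable_sq hh.aestronglyMeasurable).2
      (integrableOn_closedBall (hh.pow 2) R)
  rw [← setIntegral_closedBall_eq_integral ((support_mul_subset_right f g).trans hgR),
    ← setIntegral_closedBall_eq_integral hgR2]
  calc |∫ x in closedBall 0 R, f x * g x|
      ≤ ∫ x in closedBall 0 R, ‖f x‖ * ‖g x‖ := by
        simpa only [norm_mul, Real.norm_eq_abs] using
          norm_integral_le_integral_norm (fun x ↦ f x * g x)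
    _ ≤ _ := by
        simpa [Real.sqrt_eq_rpow] using
          integral_mul_norm_le_Lp_mul_Lq Real.HolderConjugate.two_two (memLp hf) (memLp hg)

lemma integral_sq_le {M : ℝ} (hg : support g ⊆ closedBall 0 R) (hM : ∀ x, |g x| ≤ M) :
    ∫ x, g x ^ 2 ≤ M ^ 2 * volume.real (closedBall (0 : R3) R) := by
  have hgR2 : support (fun x ↦ g x ^ 2) ⊆ closedBall 0 R :=
    fun x hx ↦ hg (by simpa using hx)
  rw [← setIntegral_closedBall_eq_integral hgR2]
  refine (Real.le_norm_self _).trans (norm_setIntegral_le_of_norm_le_const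
    measure_closedBall_lt_top fun x _ ↦ ?_)
  rw [norm_pow, Real.norm_eq_abs]
  exact pow_le_pow_left₀ (abs_nonneg _) (hM x) 2

end IntegralBounds

/-- The divergence of the vector field on `ℝ³` with components `h 0`, `h 1`, `h 2`. -/
def divergence (h : Fin 3 → R3 → ℝ) (x : R3) : ℝ := ∑ i, pd (h i) i x

/-- Classical solutions of the stationary Stokes system `-Δu + ∇p + div F = 0`, `div u = 0`, where
`u` is given by its components and `(div F)_i = ∑ j, ∂_j F_ij`. -/
structure IsStokesSolution (p : R3 → ℝ) (u : Fin 3 → R3 → ℝ) (F : Fin 3 → Fin 3 → R3 → ℝ) :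
    Prop where
  contDiff_pressure : ContDiff ℝ 1 p
  contDiff_velocity : ∀ i, ContDiff ℝ 2 (u i)
  contDiff_stress : ∀ i j, ContDiff ℝ 1 (F i j)
  pd_pressure : ∀ i x, pd p i x = lap (u i) x - ∑ j, pd (F i j) j x
  divergence_velocity : ∀ x, divergence u x = 0

section Divergence

variable {h : Fin 3 → R3 → ℝ} {f : R3 → ℝ}

lemma continuous_divergence (hh : ∀ i, ContDiff ℝ 1 (h i)) : Continuous (divergence h) :=
  continuous_finsetSum _ fun i _ ↦ continuous_pd (hh i) i

lemma support_divergence_subset_closedBall {R : ℝ} (hR : ∀ i, support (h i) ⊆ closedBall 0 R) :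
    support (divergence h) ⊆ closedBall 0 R := by
  intro x hx
  obtain ⟨i, -, hi⟩ := Finset.exists_ne_zero_of_sum_ne_zero hx
  exact support_pd_subset_closedBall (hR i) i hi

lemma integral_mul_divergence (hf : ContDiff ℝ 1 f) (hh : ∀ i, ContDiff ℝ 1 (h i))
    (hc : ∀ i, HasCompactSupport (h i)) :
    ∫ x, f x * divergence h x = -∑ i, ∫ x, pd f i x * h i x := by
  simp only [divergence, Finset.mul_sum]
  rw [integral_finsetSum _ fun i _ ↦ integrable_mul_of_hasCompactSupport hf.continuous
    (continuous_pd (hh i) i) (hasCompactSupport_pd (hc i) i), ← Finset.sum_neg_distrib]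
  exact Finset.sum_congr rfl fun i _ ↦ integral_mul_pd hf (hh i) (hc i) i

lemma sum_integral_mul_pd (hh : ∀ i, ContDiff ℝ 1 (h i)) (hf : ContDiff ℝ 1 f)
    (hc : HasCompactSupport f) : ∑ i, ∫ x, h i x * pd f i x = -∫ x, divergence h x * f x := by
  simp only [divergence, Finset.sum_mul]
  rw [integral_finsetSum _ fun i _ ↦ integrable_mul_of_hasCompactSupport (continuous_pd (hh i) i)
    hf.continuous hc, ← Finset.sum_neg_distrib]
  exact Finset.sum_congr rfl fun i _ ↦ integral_mul_pd (hh i) hf hc i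

lemma divergence_convolution (hf : Continuous f) (hh : ∀ i, ContDiff ℝ 1 (h i))
    (hc : ∀ i, HasCompactSupport (h i)) :
    divergence (fun i ↦ f ⋆ h i) = f ⋆ divergence h := by
  funext x
  simp only [divergence, pd_convolution_right hf (hh _) (hc _), convolution_lsmul_apply,
    Finset.mul_sum]
  refine (integral_finsetSum _ fun i _ ↦ integrable_mul_of_hasCompactSupport hf ?_ ?_).symm
  · exact (continuous_pd (hh i) i).comp (continuous_const.sub continuous_id)
  · exact (hasCompactSupport_pd (hc i) i).comp_homeomorph (Homeomorph.subLeft x)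

end Divergence

namespace IsStokesSolution

variable {p : R3 → ℝ} {u : Fin 3 → R3 → ℝ} {F : Fin 3 → Fin 3 → R3 → ℝ}

lemma integral_pressure_mul_divergence (hs : IsStokesSolution p u F) {k : Fin 3 → R3 → ℝ}
    (hk : ∀ i, ContDiff ℝ 2 (k i)) (hc : ∀ i, HasCompactSupport (k i)) :
    ∫ x, p x * divergence k x =
      -∑ i, ((∫ x, u i x * lap (k i) x) + ∑ j, ∫ x, F i j x * pd (k i) j x) := by
  have hk1 (i : Fin 3) : ContDiff ℝ 1 (k i) := (hk i).of_le one_le_two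
  have hF (i j : Fin 3) : Integrable fun x ↦ pd (F i j) j x * k i x :=
    integrable_mul_of_hasCompactSupport (continuous_pd (hs.contDiff_stress i j) j)
      (hk i).continuous (hc i)
  rw [integral_mul_divergence hs.contDiff_pressure hk1 hc]
  congr 1
  refine Finset.sum_congr rfl fun i _ ↦ ?_
  simp only [hs.pd_pressure, sub_mul, Finset.sum_mul]
  rw [integral_sub (integrable_mul_of_hasCompactSupport (continuous_lap (hs.contDiff_velocity i))
      (hk i).continuous (hc i)) (integrable_finsetSum _ fun j _ ↦ hF i j),
    ← integral_mul_lap (hs.contDiff_velocity i) (hk i) (hc i),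
    integral_finsetSum _ fun j _ ↦ hF i j, sub_eq_add_neg, ← Finset.sum_neg_distrib]
  simp only [integral_mul_pd (hs.contDiff_stress i _) (hk1 i) (hc i)]

lemma integral_pressure_mul_lap (hs : IsStokesSolution p u F) {q : R3 → ℝ} (hq : ContDiff ℝ 3 q)
    (hc : HasCompactSupport q) :
    ∫ x, p x * lap q x = -∑ i, ∑ j, ∫ x, F i j x * pd (pd q i) j x := by
  have hq1 (i : Fin 3) : ContDiff ℝ 2 (pd q i) := contDiff_pd hq (by norm_num) i
  have hq2 (i j : Fin 3) : ContDiff ℝ 1 (pd (pd q i) j) := contDiff_pd (hq1 i) (by norm_num) j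
  have hlap : ContDiff ℝ 1 (lap q) := contDiff_lap hq (by norm_num)
  have lap_pd (i : Fin 3) : lap (pd q i) = pd (lap q) i := by
    funext x
    rw [show lap q = fun x ↦ ∑ j, pd (pd q j) j x from rfl,
      pd_sum _ fun j ↦ (hq2 j j).differentiable one_ne_zero]
    refine Finset.sum_congr rfl fun j _ ↦ ?_
    rw [pd_comm (hq.of_le (by norm_num)) i j, pd_comm (hq1 j) i j]
  have solenoidal : ∑ i, ∫ x, u i x * lap (pd q i) x = 0 := by
    simp only [lap_pd]
    rw [sum_integral_mul_pd (fun i ↦ (hs.contDiff_velocity i).of_le one_le_two) hlap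
      (hasCompactSupport_lap hc)]
    simp [hs.divergence_velocity]
  have h := hs.integral_pressure_mul_divergence hq1 (fun i ↦ hasCompactSupport_pd hc i)
  rw [Finset.sum_add_distrib, solenoidal, zero_add] at h
  exact h

lemma abs_integral_pressure_mul_lap_le (hs : IsStokesSolution p u F) {q : R3 → ℝ}
    (hq : ContDiff ℝ 3 q) {L m : ℝ} (hL : support q ⊆ closedBall 0 L) (hm : ∀ x, |lap q x| ≤ m) :
    |∫ x, p x * lap q x| ≤ m * √(volume.real (closedBall (0 : R3) L)) *
      ∑ i, ∑ j, √(∫ x in closedBall 0 L, F i j x ^ 2) := by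
  have hc := hasCompactSupport_of_support_subset_closedBall hL
  have hm0 : 0 ≤ m := (abs_nonneg _).trans (hm 0)
  have hq2 (i j : Fin 3) : Continuous (pd (pd q i) j) :=
    continuous_pd (contDiff_pd hq (by norm_num) i) j
  have hsupp (i j : Fin 3) : support (pd (pd q i) j) ⊆ closedBall 0 L :=
    support_pd_subset_closedBall (support_pd_subset_closedBall hL i) j
  have hlap : support (lap q) ⊆ closedBall 0 L :=
    support_divergence_subset_closedBall (h := pd q) fun i ↦ support_pd_subset_closedBall hL i
  have hess (i j : Fin 3) :
      √(∫ x, pd (pd q i) j x ^ 2) ≤ m * √(volume.real (closedBall (0 : R3) L)) := by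
    rw [← Real.sqrt_sq hm0, ← Real.sqrt_mul (sq_nonneg m)]
    exact Real.sqrt_le_sqrt ((integral_pd_pd_sq_le hq hc i j).trans (integral_sq_le hlap hm))
  rw [hs.integral_pressure_mul_lap hq hc, abs_neg, Finset.mul_sum]
  refine (Finset.abs_sum_le_sum_abs _ _).trans (Finset.sum_le_sum fun i _ ↦ ?_)
  rw [Finset.mul_sum]
  refine (Finset.abs_sum_le_sum_abs _ _).trans (Finset.sum_le_sum fun j _ ↦ ?_)
  rw [mul_comm _ √_]
  exact (abs_integral_mul_le_sqrt_mul_sqrt (hs.contDiff_stress i j).continuous (hq2 i j)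
    (hsupp i j)).trans (mul_le_mul_of_nonneg_left (hess i j) (Real.sqrt_nonneg _))

variable {ρ g : R3 → ℝ} {h : Fin 3 → R3 → ℝ} {R L m : ℝ}

lemma abs_integral_pressure_mul_sub_dilate_le (hs : IsStokesSolution p u F)
    (hρ : IsNewtonianMollifier ρ) (hg : Continuous g) (hL : 0 ≤ L)
    (hgL : support g ⊆ closedBall 0 L) (hm : ∀ x, |g x| ≤ m) {δ : ℝ} (hδ : 0 < δ) (hR : δ ≤ R) :
    |∫ x, p x * ((dilate ρ R ⋆ g) x - (dilate ρ δ ⋆ g) x)| ≤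
      2 * m * √(volume.real (closedBall (0 : R3) (R + L))) *
        ∑ i, ∑ j, √(∫ x in closedBall 0 (R + L), F i j x ^ 2) := by
  obtain ⟨N, hN, hNR, hlapN⟩ := hρ.exists_lap_eq δ R hδ hR
  have hR0 : 0 < R := hδ.trans_le hR
  have hNc : HasCompactSupport N := hasCompactSupport_of_support_subset_closedBall hNR
  have hint (s : ℝ) (hs : 0 < s) (x : R3) : Integrable fun t ↦ dilate ρ s t * g (x - t) := by
    simpa only [mul_comm] using integrable_mul_of_hasCompactSupport
      (by fun_prop : Continuous fun t ↦ g (x - t)) (hρ.continuous_dilate s)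
      (hρ.hasCompactSupport_dilate hs)
  have hlap (x : R3) : lap (N ⋆ g) x = (dilate ρ R ⋆ g) x - (dilate ρ δ ⋆ g) x := by
    rw [lap_convolution_left (contDiff_infty.1 hN 2) hNc hg]
    simp only [convolution_lsmul_apply, hlapN, sub_mul]
    exact integral_sub (hint R hR0 x) (hint δ hδ x)
  simp only [← hlap]
  refine hs.abs_integral_pressure_mul_lap_le ?_
    (support_convolution_subset_closedBall hR0.le hL hNR hgL) fun x ↦ ?_
  · exact hNc.contDiff_convolution_left _ (contDiff_infty.1 hN 3) hg.locallyIntegrable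
  · rw [hlap, two_mul]
    exact (abs_sub _ _).trans (add_le_add (hρ.abs_dilate_convolution_le hR0 hm x)
      (hρ.abs_dilate_convolution_le hδ hm x))

lemma abs_integral_pressure_mul_dilate_sub_le (hs : IsStokesSolution p u F)
    (hρ : IsNewtonianMollifier ρ) (hg : Continuous g) (hL : 0 ≤ L)
    (hgL : support g ⊆ closedBall 0 L) (hm : ∀ x, |g x| ≤ m) (hR : 0 < R) :
    |∫ x, p x * ((dilate ρ R ⋆ g) x - g x)| ≤
      2 * m * √(volume.real (closedBall (0 : R3) (R + L))) *
        ∑ i, ∑ j, √(∫ x in closedBall 0 (R + L), F i j x ^ 2) := by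
  have hp := hs.contDiff_pressure.continuous
  have hcont (s : ℝ) (hs : 0 < s) : Continuous (dilate ρ s ⋆ g) :=
    (hρ.hasCompactSupport_dilate hs).continuous_convolution_left _ (hρ.continuous_dilate s)
      hg.locallyIntegrable
  have hsupp {s : ℝ} (hs : 0 < s) (hsR : s ≤ R) :
      support (dilate ρ s ⋆ g) ⊆ closedBall 0 (R + L) :=
    (support_convolution_subset_closedBall hs.le hL (support_dilate_subset hρ.support_subset hs)
      hgL).trans (closedBall_subset_closedBall (by linarith))
  have hdom : Integrable fun x ↦ (closedBall 0 (R + L)).indicator (fun x ↦ |p x| * (2 * m)) x :=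
    (integrable_indicator_iff measurableSet_closedBall).2
      ((integrableOn_closedBall hp (R + L)).abs.mul_const _)
  have hlim : Tendsto (fun δ ↦ ∫ x, p x * ((dilate ρ R ⋆ g) x - (dilate ρ δ ⋆ g) x))
      (nhdsWithin 0 (Set.Ioi 0)) (nhds (∫ x, p x * ((dilate ρ R ⋆ g) x - g x))) := by
    refine tendsto_integral_filter_of_dominated_convergence _ ?_ ?_ hdom ?_
    · filter_upwards [self_mem_nhdsWithin] with δ hδ
      exact (hp.mul ((hcont R hR).sub (hcont δ hδ))).aestronglyMeasurable
    · filter_upwards [Ioo_mem_nhdsGT hR] with δ hδ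
      refine ae_of_all _ fun x ↦ ?_
      by_cases hx : x ∈ closedBall 0 (R + L)
      · rw [Set.indicator_of_mem hx, norm_mul, two_mul]
        exact mul_le_mul_of_nonneg_left ((norm_sub_le _ _).trans
          (add_le_add (hρ.abs_dilate_convolution_le hR hm x)
            (hρ.abs_dilate_convolution_le hδ.1 hm x))) (norm_nonneg _)
      · simp [Set.indicator_of_notMem hx, notMem_support.1 (mt (hsupp hR le_rfl ·) hx),
          notMem_support.1 (mt (hsupp hδ.1 hδ.2.le ·) hx)]
    · exact ae_of_all _ fun x ↦
        (tendsto_const_nhds.sub (hρ.tendsto_dilate_convolution hg x)).const_mul _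
  refine le_of_tendsto hlim.abs ?_
  filter_upwards [Ioo_mem_nhdsGT hR] with δ hδ
  exact hs.abs_integral_pressure_mul_sub_dilate_le hρ hg hL hgL hm hδ.1 hδ.2.le

lemma abs_integral_pressure_mul_dilate_convolution_le (hs : IsStokesSolution p u F)
    (hρ : IsNewtonianMollifier ρ) (hh : ∀ i, ContDiff ℝ 1 (h i)) (hL : 0 ≤ L)
    (hhL : ∀ i, support (h i) ⊆ closedBall 0 L) {C : ℝ} (hC₁ : ∀ j x, |pd ρ j x| ≤ C)
    (hC₂ : ∀ x, |lap ρ x| ≤ C) (hR : 0 < R) :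
    |∫ x, p x * (dilate ρ R ⋆ divergence h) x| ≤
      ∑ i, (R⁻¹ ^ 5 * C * (∫ x, |h i x|) * (∫ x in closedBall 0 (R + L), |u i x|) +
        ∑ j, R⁻¹ ^ 4 * C * (∫ x, |h i x|) * ∫ x in closedBall 0 (R + L), |F i j x|) := by
  have hρ2 : ContDiff ℝ 2 ρ := contDiff_infty.1 hρ.contDiff 2
  have hd2 : ContDiff ℝ 2 (dilate ρ R) := contDiff_dilate hρ2 R
  have hdc := hρ.hasCompactSupport_dilate hR
  have hhc (i : Fin 3) : HasCompactSupport (h i) :=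
    hasCompactSupport_of_support_subset_closedBall (hhL i)
  have hhi (i : Fin 3) : Integrable (h i) :=
    (hh i).continuous.integrable_of_hasCompactSupport (hhc i)
  have hk (i : Fin 3) : ContDiff ℝ 2 (dilate ρ R ⋆ h i) :=
    hdc.contDiff_convolution_left _ hd2 (hh i).continuous.locallyIntegrable
  have hkL (i : Fin 3) : support (dilate ρ R ⋆ h i) ⊆ closedBall 0 (R + L) :=
    support_convolution_subset_closedBall hR.le hL (support_dilate_subset hρ.support_subset hR)
      (hhL i)
  rw [← divergence_convolution hd2.continuous hh hhc, hs.integral_pressure_mul_divergence hk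
    fun i ↦ hasCompactSupport_of_support_subset_closedBall (hkL i), abs_neg]
  refine (Finset.abs_sum_le_sum_abs _ _).trans (Finset.sum_le_sum fun i _ ↦ (abs_add_le _ _).trans
    (add_le_add ?_ ((Finset.abs_sum_le_sum_abs _ _).trans (Finset.sum_le_sum fun j _ ↦ ?_))))
  · refine abs_integral_mul_le (hs.contDiff_velocity i).continuous
      (support_divergence_subset_closedBall fun j ↦ support_pd_subset_closedBall (hkL i) j)
      fun x ↦ ?_
    rw [lap_convolution_left hd2 hdc (hh i).continuous, lap_dilate hρ2]
    refine abs_convolution_le (fun y ↦ ?_) (hhi i) x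
    rw [abs_mul, abs_of_pos (by positivity)]
    exact mul_le_mul_of_nonneg_left (hC₂ _) (by positivity)
  · refine abs_integral_mul_le (hs.contDiff_stress i j).continuous
      (support_pd_subset_closedBall (hkL i) j) fun x ↦ ?_
    rw [pd_convolution_left (hd2.of_le one_le_two) hdc (hh i).continuous,
      pd_dilate (hρ2.differentiable two_ne_zero)]
    refine abs_convolution_le (fun y ↦ ?_) (hhi i) x
    rw [abs_mul, abs_of_pos (by positivity)]
    exact mul_le_mul_of_nonneg_left (hC₁ j _) (by positivity)

end IsStokesSolution

section PowerAsymptotics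

section RPow

variable {α : Type*} {l : Filter α} {r f g : α → ℝ} {a b : ℝ}

lemma rpow_mul_rpow_eventuallyEq (hr : ∀ᶠ x in l, 0 < r x) (a b : ℝ) :
    (fun x ↦ r x ^ a * r x ^ b) =ᶠ[l] fun x ↦ r x ^ (a + b) :=
  hr.mono fun _ hx ↦ (Real.rpow_add hx a b).symm

lemma isBigO_mul_rpow (hr : ∀ᶠ x in l, 0 < r x) (hf : f =O[l] fun x ↦ r x ^ a)
    (hg : g =O[l] fun x ↦ r x ^ b) : (fun x ↦ f x * g x) =O[l] fun x ↦ r x ^ (a + b) :=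
  (hf.mul hg).trans_eventuallyEq (rpow_mul_rpow_eventuallyEq hr a b)

lemma isLittleO_mul_rpow (hr : ∀ᶠ x in l, 0 < r x) (hf : f =o[l] fun x ↦ r x ^ a)
    (hg : g =O[l] fun x ↦ r x ^ b) : (fun x ↦ f x * g x) =o[l] fun x ↦ r x ^ (a + b) :=
  (hf.mul_isBigO hg).trans_eventuallyEq (rpow_mul_rpow_eventuallyEq hr a b)

lemma isLittleO_atTop_rpow_rpow (h : a < b) :
    (fun x : ℝ ↦ x ^ a) =o[atTop] fun x ↦ x ^ b := by
  refine (isLittleO_iff_tendsto' ?_).2 ?_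
  · filter_upwards [eventually_gt_atTop 0] with x hx h0
    exact absurd h0 (Real.rpow_pos_of_pos hx b).ne'
  · refine (tendsto_rpow_neg_atTop (sub_pos.2 h)).congr' ?_
    filter_upwards [eventually_gt_atTop 0] with x hx
    rw [neg_sub, Real.rpow_sub hx]

lemma isBigO_sqrt_rpow (hr : ∀ᶠ x in l, 0 < r x) (hf : f =O[l] fun x ↦ r x ^ a) :
    (fun x ↦ √(f x)) =O[l] fun x ↦ r x ^ (a / 2) := by
  obtain ⟨c, hc, h⟩ := hf.exists_pos
  refine .of_bound √c ?_
  filter_upwards [h.bound, hr] with x hx hx0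
  rw [Real.norm_of_nonneg (Real.sqrt_nonneg _), Real.norm_of_nonneg (Real.rpow_nonneg hx0.le _),
    div_eq_mul_one_div, Real.rpow_mul hx0.le, ← Real.sqrt_eq_rpow, ← Real.sqrt_mul hc.le]
  rw [Real.norm_of_nonneg (Real.rpow_nonneg hx0.le _)] at hx
  exact Real.sqrt_le_sqrt ((Real.le_norm_self _).trans hx)

lemma isBigO_comp_const_mul_rpow {f : ℝ → ℝ} {k : ℝ} (hk : 0 < k)
    (hf : f =O[atTop] fun x ↦ x ^ a) : (fun x ↦ f (k * x)) =O[atTop] fun x ↦ x ^ a := by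
  refine (hf.comp_tendsto (tendsto_id.const_mul_atTop hk)).trans (.of_bound (k ^ a) ?_)
  filter_upwards [eventually_ge_atTop 0] with x hx
  rw [comp_apply, id, Real.mul_rpow hk.le hx, norm_mul, Real.norm_of_nonneg (by positivity)]

lemma isLittleO_comp_const_mul_rpow {f : ℝ → ℝ} {k : ℝ} (hk : 0 < k)
    (hf : f =o[atTop] fun x ↦ x ^ a) : (fun x ↦ f (k * x)) =o[atTop] fun x ↦ x ^ a :=
  (hf.comp_tendsto (tendsto_id.const_mul_atTop hk)).trans_isBigO
    (isBigO_comp_const_mul_rpow hk (isBigO_refl _ _))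

end RPow

section Norm

variable {E F : Type*} [NormedAddCommGroup E] [NormedAddCommGroup F] {f : E → F} {a b c : ℝ}

lemma eventually_norm_pos : ∀ᶠ x in cobounded E, 0 < ‖x‖ :=
  tendsto_norm_cobounded_atTop.eventually_gt_atTop 0

lemma isLittleO_norm_rpow_norm_rpow (h : a < b) :
    (fun x : E ↦ ‖x‖ ^ a) =o[cobounded E] fun x ↦ ‖x‖ ^ b :=
  (isLittleO_atTop_rpow_rpow h).comp_tendsto tendsto_norm_cobounded_atTop

lemma isBigOWith_norm_rpow_neg {M K : ℝ} (h : ∀ x, K ≤ ‖x‖ → ‖x‖ ^ c * ‖f x‖ ≤ M) :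
    IsBigOWith M (cobounded E) f fun x ↦ ‖x‖ ^ (-c) := by
  refine .of_bound ?_
  filter_upwards [eventually_norm_pos,
    tendsto_norm_cobounded_atTop.eventually_ge_atTop K] with x hx hxK
  rw [Real.norm_of_nonneg (by positivity), Real.rpow_neg hx.le, ← div_eq_mul_inv,
    le_div_iff₀' (by positivity)]
  exact h x hxK

lemma isLittleO_norm_rpow_neg (h : ∀ ε > 0, ∃ K, ∀ x, K ≤ ‖x‖ → ‖x‖ ^ c * ‖f x‖ < ε) :
    f =o[cobounded E] fun x ↦ ‖x‖ ^ (-c) :=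
  isLittleO_iff_forall_isBigOWith.2 fun ε hε ↦
    let ⟨_, hK⟩ := h ε hε
    isBigOWith_norm_rpow_neg fun x hx ↦ (hK x hx).le

lemma isBigO_apply {α ι : Type*} [Fintype ι] (l : Filter α) (w : α → EuclideanSpace ℝ ι) (i : ι) :
    (fun x ↦ w x i) =O[l] w :=
  isBigO_of_le l fun x ↦ PiLp.norm_apply_le (w x) i

end Norm

section Haar

open Module (finrank)

variable {E : Type*} [NormedAddCommGroup E] [NormedSpace ℝ E] {f G : E → ℝ} {a : ℝ}

lemma eventually_forall_abs_mul_comp_smul_le (hf : f =o[cobounded E] fun x ↦ ‖x‖ ^ (-a))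
    (ha : 0 ≤ a) (hG : ∀ x, ‖x‖ < 1 → G x = 0) {ε : ℝ} (hε : 0 < ε) :
    ∀ᶠ R in atTop, ∀ x, |f x * G (R⁻¹ • x)| ≤ ε * R ^ (-a) * |G (R⁻¹ • x)| := by
  obtain ⟨K, hK⟩ := (hasBasis_cobounded_norm.eventually_iff.1 (hf.bound hε))
  filter_upwards [eventually_ge_atTop K, eventually_gt_atTop 0] with R hRK hR x
  rw [abs_mul]
  obtain hx | hx := lt_or_ge ‖x‖ R
  · rw [hG, abs_zero, mul_zero, mul_zero]
    rwa [norm_smul, norm_inv, Real.norm_of_nonneg hR.le, inv_mul_lt_one₀ hR]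
  · refine mul_le_mul_of_nonneg_right ((hK.2 (hRK.trans hx)).trans ?_) (abs_nonneg _)
    rw [Real.norm_of_nonneg (by positivity)]
    exact mul_le_mul_of_nonneg_left (Real.rpow_le_rpow_of_nonpos hR hx (neg_nonpos.2 ha)) hε.le

variable [FiniteDimensional ℝ E] [MeasurableSpace E] [BorelSpace E] (μ : Measure E)
  [μ.IsAddHaarMeasure]

lemma isLittleO_integral_mul_comp_smul (hf : f =o[cobounded E] fun x ↦ ‖x‖ ^ (-a))
    (ha : 0 ≤ a) (hG : ∀ x, ‖x‖ < 1 → G x = 0) (hGi : Integrable G μ) :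
    (fun R : ℝ ↦ ∫ x, f x * G (R⁻¹ • x) ∂μ) =o[atTop] fun R ↦ R ^ (finrank ℝ E - a) := by
  refine isLittleO_iff.2 fun c hc ↦ ?_
  have hI : 0 ≤ ∫ x, |G x| ∂μ := integral_nonneg fun x ↦ abs_nonneg _
  have hε : 0 < c / ((∫ x, |G x| ∂μ) + 1) := by positivity
  filter_upwards [eventually_forall_abs_mul_comp_smul_le hf ha hG hε, eventually_gt_atTop 0]
    with R hbound hR
  have hGR : Integrable (fun x ↦ |G (R⁻¹ • x)|) μ := (hGi.comp_smul (inv_ne_zero hR.ne')).abs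
  calc ‖∫ x, f x * G (R⁻¹ • x) ∂μ‖
      ≤ ∫ x, c / ((∫ x, |G x| ∂μ) + 1) * R ^ (-a) * |G (R⁻¹ • x)| ∂μ :=
        norm_integral_le_of_norm_le (hGR.const_mul _) (ae_of_all _ hbound)
    _ = c * ((∫ x, |G x| ∂μ) / ((∫ x, |G x| ∂μ) + 1)) * R ^ (finrank ℝ E - a) := by
        rw [integral_const_mul, Measure.integral_comp_inv_smul_of_nonneg μ (fun x ↦ |G x|) hR.le,
          smul_eq_mul, sub_eq_add_neg, Real.rpow_add hR, Real.rpow_natCast]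
        ring
    _ ≤ c * ‖R ^ (finrank ℝ E - a)‖ := by
        rw [Real.norm_of_nonneg (by positivity)]
        refine mul_le_mul_of_nonneg_right (mul_le_of_le_one_right hc.le ?_) (by positivity)
        exact div_le_one_of_le₀ (by linarith) (by linarith)

variable {μ}

lemma setIntegral_closedBall_norm_rpow {R : ℝ} (hR : 0 < R) (a : ℝ) :
    ∫ x in closedBall (0 : E) R, ‖x‖ ^ (-a) ∂μ =
      R ^ (finrank ℝ E - a) * ∫ x in closedBall (0 : E) 1, ‖x‖ ^ (-a) ∂μ := by
  have h := Measure.setIntegral_comp_smul_of_pos μ (fun x : E ↦ ‖x‖ ^ (-a)) (closedBall 0 1) hR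
  rw [smul_unitClosedBall_of_nonneg hR.le] at h
  simp only [norm_smul, Real.norm_of_nonneg hR.le, Real.mul_rpow hR.le (norm_nonneg _),
    integral_const_mul, smul_eq_mul] at h
  rw [sub_eq_add_neg, Real.rpow_add hR, Real.rpow_natCast, mul_assoc, h,
    mul_inv_cancel_left₀ (by positivity)]

variable [Nontrivial E]

lemma integrableOn_closedBall_norm_rpow (ha : a < finrank ℝ E) (R : ℝ) :
    IntegrableOn (fun x : E ↦ ‖x‖ ^ (-a)) (closedBall 0 R) μ := by
  have hmeas : Measurable fun x : E ↦ ‖x‖ ^ (-a) := by fun_prop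
  refine (locallyIntegrable_of_norm_le_rpow (C := 1) Module.finrank_pos ha (ae_of_all _ fun x ↦ ?_)
    hmeas.aestronglyMeasurable).integrableOn_isCompact (isCompact_closedBall 0 R)
  rw [one_mul, Real.norm_of_nonneg (by positivity)]

lemma eventually_setIntegral_closedBall_abs_le (hfi : LocallyIntegrable f μ)
    (ha : a < finrank ℝ E) {c : ℝ} (hc : 0 < c)
    (hf : ∀ᶠ x in cobounded E, |f x| ≤ c * ‖x‖ ^ (-a)) :
    ∀ᶠ R in atTop, ∫ x in closedBall 0 R, |f x| ∂μ ≤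
      c * ((∫ x in closedBall (0 : E) 1, ‖x‖ ^ (-a) ∂μ) + 1) * R ^ (finrank ℝ E - a) := by
  obtain ⟨K, -, hK⟩ := hasBasis_cobounded_norm.eventually_iff.1 hf
  have hfK : IntegrableOn f (closedBall 0 K) μ :=
    hfi.integrableOn_isCompact (isCompact_closedBall 0 K)
  have hdom (x : E) : |f x| ≤ c * ‖x‖ ^ (-a) + (closedBall 0 K).indicator (fun x ↦ |f x|) x := by
    by_cases hx : x ∈ closedBall 0 K
    · rw [Set.indicator_of_mem hx]
      exact le_add_of_nonneg_left (by positivity)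
    · rw [Set.indicator_of_notMem hx, add_zero]
      exact hK (by simpa using (not_le.1 (mt mem_closedBall_zero_iff.2 hx)).le)
  have hind : Integrable ((closedBall 0 K).indicator fun x ↦ |f x|) μ :=
    (integrable_indicator_iff measurableSet_closedBall).2 hfK.abs
  have hlarge := (tendsto_rpow_atTop (sub_pos.2 ha)).eventually_ge_atTop
    (c⁻¹ * ∫ x in closedBall 0 K, |f x| ∂μ)
  filter_upwards [hlarge, eventually_gt_atTop 0] with R hRlarge hR
  calc ∫ x in closedBall 0 R, |f x| ∂μ
      ≤ ∫ x in closedBall 0 R, (c * ‖x‖ ^ (-a) +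
          (closedBall 0 K).indicator (fun x ↦ |f x|) x) ∂μ :=
        integral_mono (hfi.integrableOn_isCompact (isCompact_closedBall 0 R)).abs
          (((integrableOn_closedBall_norm_rpow ha R).const_mul c).add hind.integrableOn) hdom
    _ ≤ c * (R ^ (finrank ℝ E - a) * ∫ x in closedBall (0 : E) 1, ‖x‖ ^ (-a) ∂μ) +
          ∫ x in closedBall 0 K, |f x| ∂μ := by
        rw [integral_add ((integrableOn_closedBall_norm_rpow ha R).const_mul c) hind.integrableOn,
          integral_const_mul, setIntegral_closedBall_norm_rpow hR,
          ← integral_indicator (μ := μ) (measurableSet_closedBall (x := (0 : E)) (ε := K))]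
        exact add_le_add_right (setIntegral_le_integral hind (ae_of_all _ fun x ↦
          Set.indicator_nonneg (fun _ _ ↦ abs_nonneg _) x)) _
    _ ≤ c * ((∫ x in closedBall (0 : E) 1, ‖x‖ ^ (-a) ∂μ) + 1) * R ^ (finrank ℝ E - a) := by
        rw [inv_mul_le_iff₀ hc] at hRlarge
        linarith

lemma isLittleO_setIntegral_closedBall_abs (hfi : LocallyIntegrable f μ) (ha : a < finrank ℝ E)
    (hf : f =o[cobounded E] fun x ↦ ‖x‖ ^ (-a)) :
    (fun R ↦ ∫ x in closedBall 0 R, |f x| ∂μ) =o[atTop] fun R ↦ R ^ (finrank ℝ E - a) := by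
  refine isLittleO_iff.2 fun c hc ↦ ?_
  have hI : 0 ≤ ∫ x in closedBall (0 : E) 1, ‖x‖ ^ (-a) ∂μ :=
    integral_nonneg fun x ↦ by positivity
  have hε : 0 < c / ((∫ x in closedBall (0 : E) 1, ‖x‖ ^ (-a) ∂μ) + 1) :=
    div_pos hc (add_pos_of_nonneg_of_pos hI one_pos)
  filter_upwards [eventually_setIntegral_closedBall_abs_le hfi ha hε ((hf.bound hε).mono fun x hx ↦
    by simpa [Real.abs_rpow_of_nonneg] using hx), eventually_gt_atTop 0] with R hbound hR
  rwa [div_mul_cancel₀ _ (add_pos_of_nonneg_of_pos hI one_pos).ne',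
    ← Real.norm_of_nonneg (by positivity : 0 ≤ R ^ (finrank ℝ E - a)),
    ← Real.norm_of_nonneg (integral_nonneg fun x ↦ abs_nonneg (f x))] at hbound

lemma isBigO_setIntegral_closedBall_abs (hfi : LocallyIntegrable f μ) (ha : a < finrank ℝ E)
    (hf : f =O[cobounded E] fun x ↦ ‖x‖ ^ (-a)) :
    (fun R ↦ ∫ x in closedBall 0 R, |f x| ∂μ) =O[atTop] fun R ↦ R ^ (finrank ℝ E - a) := by
  obtain ⟨c, hc, hfc⟩ := hf.exists_pos
  refine .of_bound (c * ((∫ x in closedBall (0 : E) 1, ‖x‖ ^ (-a) ∂μ) + 1)) ?_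
  filter_upwards [eventually_setIntegral_closedBall_abs_le hfi ha hc (hfc.bound.mono fun x hx ↦
    by simpa [Real.abs_rpow_of_nonneg] using hx), eventually_gt_atTop 0] with R hbound hR
  rwa [Real.norm_of_nonneg (by positivity : 0 ≤ R ^ (finrank ℝ E - a)),
    Real.norm_of_nonneg (integral_nonneg fun x ↦ abs_nonneg (f x))]

end Haar

end PowerAsymptotics

lemma exists_bound_pd_lap {f : R3 → ℝ} (hf : ContDiff ℝ 2 f) (hc : HasCompactSupport f) :
    ∃ C, (∀ j x, |pd f j x| ≤ C) ∧ ∀ x, |lap f x| ≤ C := by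
  obtain ⟨C, hC⟩ := (hasCompactSupport_lap hc).exists_bound_of_continuous (continuous_lap hf)
  choose D hD using fun j ↦ (hasCompactSupport_pd hc j).exists_bound_of_continuous
    (continuous_pd (hf.of_le one_le_two) j)
  have hD0 (j : Fin 3) : 0 ≤ D j := (norm_nonneg _).trans (hD j 0)
  exact ⟨max C (∑ j, D j), fun j x ↦ (hD j x).trans <| le_max_of_le_right <|
    Finset.single_le_sum (fun j _ ↦ hD0 j) (Finset.mem_univ j),
    fun x ↦ (hC x).trans (le_max_left _ _)⟩

section Cutoff

/-- A fixed smooth bump function on `ℝ³`, equal to `1` on the unit ball and supported in the ball of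
radius `2`. -/
def unitCutoff : ContDiffBump (0 : R3) where
  rIn := 1
  rOut := 2
  rIn_pos := one_pos
  rIn_lt_rOut := one_lt_two

/-- The smooth cutoff at scale `R`, equal to `1` on the ball of radius `R` and supported in the ball
of radius `2 * R`. -/
def cutoff (R : ℝ) (x : R3) : ℝ := unitCutoff (R⁻¹ • x)

variable {R : ℝ}

lemma contDiff_cutoff {n : ℕ∞} (R : ℝ) : ContDiff ℝ n (cutoff R) :=
  unitCutoff.contDiff.comp (contDiff_const_smul R⁻¹)

lemma cutoff_nonneg (R : ℝ) (x : R3) : 0 ≤ cutoff R x := unitCutoff.nonneg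

lemma cutoff_le_one (R : ℝ) (x : R3) : cutoff R x ≤ 1 := unitCutoff.le_one

lemma norm_inv_smul_le_iff (hR : 0 < R) {c : ℝ} {x : R3} : ‖R⁻¹ • x‖ ≤ c ↔ ‖x‖ ≤ c * R := by
  rw [norm_smul, norm_inv, Real.norm_of_nonneg hR.le, inv_mul_le_iff₀ hR, mul_comm]

lemma cutoff_eq_one (hR : 0 < R) {x : R3} (hx : ‖x‖ ≤ R) : cutoff R x = 1 :=
  unitCutoff.one_of_mem_closedBall <| mem_closedBall_zero_iff.2 <|
    (norm_inv_smul_le_iff hR).2 (by rwa [unitCutoff, one_mul])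

lemma support_cutoff_subset (hR : 0 < R) : support (cutoff R) ⊆ closedBall 0 (2 * R) := by
  intro x hx
  have hx' : R⁻¹ • x ∈ ball 0 2 := unitCutoff.support_eq ▸ hx
  exact mem_closedBall_zero_iff.2 ((norm_inv_smul_le_iff hR).1 (mem_ball_zero_iff.1 hx').le)

lemma hasCompactSupport_cutoff (hR : 0 < R) : HasCompactSupport (cutoff R) :=
  hasCompactSupport_of_support_subset_closedBall (support_cutoff_subset hR)

lemma pd_cutoff (R : ℝ) (j : Fin 3) :
    pd (cutoff R) j = fun x ↦ R⁻¹ * pd unitCutoff j (R⁻¹ • x) :=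
  pd_comp_smul _ _ _

lemma lap_cutoff (R : ℝ) : lap (cutoff R) = fun x ↦ R⁻¹ ^ 2 * lap unitCutoff (R⁻¹ • x) :=
  lap_comp_smul unitCutoff.contDiff _

lemma pd_unitCutoff_eq_zero (j : Fin 3) {x : R3} (hx : ‖x‖ < 1) : pd unitCutoff j x = 0 := by
  have h : unitCutoff =ᶠ[nhds x] 1 :=
    unitCutoff.eventuallyEq_one_of_mem_ball (mem_ball_zero_iff.2 hx)
  rw [pd, h.fderiv_eq, Pi.one_def, fderiv_const_apply, zero_apply]

lemma lap_unitCutoff_eq_zero {x : R3} (hx : ‖x‖ < 1) : lap unitCutoff x = 0 := by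
  refine Finset.sum_eq_zero fun j _ ↦ ?_
  have h : pd unitCutoff j =ᶠ[nhds x] 0 := by
    filter_upwards [isOpen_ball.mem_nhds (mem_ball_zero_iff.2 hx)] with y hy
    exact pd_unitCutoff_eq_zero j (mem_ball_zero_iff.1 hy)
  rw [pd, h.fderiv_eq, Pi.zero_def, fderiv_const_apply, zero_apply]

end Cutoff

section PressureFlux

variable {u : Fin 3 → R3 → ℝ} {a : ℝ}

lemma divergence_cutoff_mul (hu : ∀ i, Differentiable ℝ (u i)) (hdiv : ∀ x, divergence u x = 0)
    (R : ℝ) (x : R3) :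
    divergence (fun i y ↦ cutoff R y * u i y) x =
      R⁻¹ * ∑ j, u j x * pd unitCutoff j (R⁻¹ • x) := by
  have hR : Differentiable ℝ (cutoff R) := (contDiff_cutoff (n := 1) R).differentiable one_ne_zero
  simp only [divergence] at hdiv
  simp only [divergence, pd_mul hR (hu _), pd_cutoff, Finset.sum_add_distrib, ← Finset.mul_sum,
    hdiv, mul_zero, zero_add]
  rw [Finset.mul_sum]
  exact Finset.sum_congr rfl fun j _ ↦ by ring

lemma eventually_abs_divergence_cutoff_mul_le (hu : ∀ i, Differentiable ℝ (u i))
    (hdiv : ∀ x, divergence u x = 0) (ha : 0 ≤ a)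
    (hdecay : ∀ i, u i =o[cobounded R3] fun x ↦ ‖x‖ ^ (-a)) {ε : ℝ} (hε : 0 < ε) :
    ∀ᶠ R in atTop, ∀ x,
      |divergence (fun i y ↦ cutoff R y * u i y) x| ≤ ε * R ^ (-(a + 1)) := by
  obtain ⟨C, hC, -⟩ := exists_bound_pd_lap unitCutoff.contDiff unitCutoff.hasCompactSupport
  have hC0 : 0 ≤ C := (abs_nonneg _).trans (hC 0 0)
  have hδ : 0 < ε / (3 * C + 1) := by positivity
  filter_upwards [eventually_all.2 fun j ↦ eventually_forall_abs_mul_comp_smul_le (hdecay j) ha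
    (fun x hx ↦ pd_unitCutoff_eq_zero j hx) hδ, eventually_gt_atTop 0] with R hbound hR x
  rw [divergence_cutoff_mul hu hdiv, abs_mul, abs_of_pos (inv_pos.2 hR)]
  calc R⁻¹ * |∑ j, u j x * pd unitCutoff j (R⁻¹ • x)|
      ≤ R⁻¹ * ∑ _j : Fin 3, ε / (3 * C + 1) * R ^ (-a) * C := by
        refine mul_le_mul_of_nonneg_left ((Finset.abs_sum_le_sum_abs _ _).trans
          (Finset.sum_le_sum fun j _ ↦ (hbound j x).trans ?_)) (by positivity)
        exact mul_le_mul_of_nonneg_left (hC j _) (by positivity)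
    _ = ε * (3 * C / (3 * C + 1)) * R ^ (-(a + 1)) := by
        rw [Fin.sum_const, neg_add, Real.rpow_add hR, Real.rpow_neg_one, nsmul_eq_mul]
        push_cast
        ring
    _ ≤ ε * R ^ (-(a + 1)) := by
        refine mul_le_mul_of_nonneg_right (mul_le_of_le_one_right hε.le ?_) (by positivity)
        exact div_le_one_of_le₀ (by linarith) (by linarith)

lemma integral_abs_cutoff_mul_le {f : R3 → ℝ} (hf : Continuous f) {R : ℝ} (hR : 0 < R) :
    ∫ x, |cutoff R x * f x| ≤ ∫ x in closedBall 0 (3 * R), |f x| := by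
  have hcont : Continuous fun x ↦ cutoff R x * f x := (contDiff_cutoff (n := 0) R).continuous.mul hf
  have hsupp : support (fun x ↦ |cutoff R x * f x|) ⊆ closedBall 0 (3 * R) := by
    refine support_subset_iff'.2 fun x hx ↦ ?_
    rw [notMem_support.1 (mt (@support_cutoff_subset R hR x) fun h ↦
      hx (closedBall_subset_closedBall (by linarith) h)), zero_mul, abs_zero]
  rw [← setIntegral_closedBall_eq_integral hsupp]
  refine integral_mono (integrableOn_closedBall hcont.abs _) (integrableOn_closedBall hf.abs _)
    fun x ↦ ?_
  rw [abs_mul, abs_of_nonneg (cutoff_nonneg R x)]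
  exact mul_le_of_le_one_left (abs_nonneg _) (cutoff_le_one R x)

lemma tendsto_zero_of_isLittleO_rpow {f : ℝ → ℝ} {e : ℝ} (he : e ≤ 0)
    (hf : f =o[atTop] fun R ↦ R ^ e) : Tendsto f atTop (nhds 0) := by
  refine (isLittleO_one_iff ℝ).1 (hf.trans_isBigO (.of_bound 1 ?_))
  filter_upwards [eventually_ge_atTop 1] with R hR
  rw [norm_one, mul_one, Real.norm_of_nonneg (by positivity)]
  exact Real.rpow_le_one_of_one_le_of_nonpos hR he

lemma isBigO_inv_pow_rpow (n : ℕ) : (fun R : ℝ ↦ R⁻¹ ^ n) =O[atTop] fun R ↦ R ^ (-n : ℝ) := by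
  refine EventuallyEq.isBigO ?_
  filter_upwards [eventually_ge_atTop 0] with R hR
  rw [Real.rpow_neg hR, Real.rpow_natCast, inv_pow]

lemma isBigO_volume_closedBall :
    (fun R ↦ volume.real (closedBall (0 : R3) R)) =O[atTop] fun R ↦ R ^ (3 : ℝ) := by
  refine .of_bound (volume.real (closedBall (0 : R3) 1)) ?_
  filter_upwards [eventually_ge_atTop 0] with R hR
  rw [Measure.addHaar_real_closedBall' volume 0 hR, finrank_euclideanSpace_fin, mul_comm, norm_mul,
    Real.norm_of_nonneg measureReal_nonneg, ← Real.rpow_natCast]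
  rfl

namespace IsStokesSolution

variable {p : R3 → ℝ} {F : Fin 3 → Fin 3 → R3 → ℝ} {ρ : R3 → ℝ}

lemma isBigO_sqrt_integral_stress_sq (hs : IsStokesSolution p u F) (ha : 1 / 2 < a)
    (hF : ∀ i j, F i j =O[cobounded R3] fun x ↦ ‖x‖ ^ (-(2 - a))) :
    (fun R ↦ ∑ i, ∑ j, √(∫ x in closedBall 0 (3 * R), F i j x ^ 2)) =O[atTop]
      fun R ↦ R ^ (a - 1 / 2) := by
  refine IsBigO.fun_sum fun i _ ↦ IsBigO.fun_sum fun j _ ↦ ?_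
  have hsq : (fun x ↦ F i j x ^ 2) =O[cobounded R3] fun x ↦ ‖x‖ ^ (-(2 * (2 - a))) := by
    convert isBigO_mul_rpow eventually_norm_pos (hF i j) (hF i j) using 3 <;> ring
  have hint := isBigO_setIntegral_closedBall_abs (μ := volume) (f := fun x ↦ F i j x ^ 2)
    ((hs.contDiff_stress i j).continuous.pow 2).locallyIntegrable
    (by rw [finrank_euclideanSpace_fin]; push_cast; linarith) hsq
  simp only [abs_sq, finrank_euclideanSpace_fin] at hint
  rw [show a - 1 / 2 = ((3 : ℕ) - 2 * (2 - a)) / 2 by push_cast; ring]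
  exact isBigO_sqrt_rpow (eventually_gt_atTop 0) (isBigO_comp_const_mul_rpow three_pos hint)

lemma tendsto_integral_pressure_mul_dilate_sub (hs : IsStokesSolution p u F)
    (hρ : IsNewtonianMollifier ρ) (ha : 1 / 2 < a)
    (hu : ∀ i, u i =o[cobounded R3] fun x ↦ ‖x‖ ^ (-a))
    (hF : ∀ i j, F i j =O[cobounded R3] fun x ↦ ‖x‖ ^ (-(2 - a))) :
    Tendsto (fun R ↦ ∫ x, p x * ((dilate ρ R ⋆ divergence fun i y ↦ cutoff R y * u i y) x -
      divergence (fun i y ↦ cutoff R y * u i y) x)) atTop (nhds 0) := by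
  have hu1 (i : Fin 3) : ContDiff ℝ 1 (u i) := (hs.contDiff_velocity i).of_le one_le_two
  have hvol : (fun R ↦ √(volume.real (closedBall (0 : R3) (3 * R)))) =O[atTop]
      fun R ↦ R ^ (3 / 2 : ℝ) :=
    isBigO_sqrt_rpow (eventually_gt_atTop 0)
      (isBigO_comp_const_mul_rpow three_pos isBigO_volume_closedBall)
  have hscale := isBigO_mul_rpow (eventually_gt_atTop 0) (isBigO_mul_rpow (eventually_gt_atTop 0)
    (isBigO_refl (fun R : ℝ ↦ R ^ (-(a + 1))) atTop) hvol) (hs.isBigO_sqrt_integral_stress_sq ha hF)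
  refine tendsto_zero_of_isLittleO_rpow (by ring_nf; exact le_rfl) (IsLittleO.trans_isBigO
    (isLittleO_iff.2 fun c hc ↦ ?_) hscale)
  filter_upwards [eventually_abs_divergence_cutoff_mul_le
    (fun i ↦ (hu1 i).differentiable one_ne_zero) hs.divergence_velocity (by linarith) hu
    (half_pos hc), eventually_gt_atTop 0] with R hm hR
  have hbound := hs.abs_integral_pressure_mul_dilate_sub_le hρ
    (continuous_divergence fun i ↦ (contDiff_cutoff R).mul (hu1 i)) (by positivity : 0 ≤ 2 * R)
    (support_divergence_subset_closedBall fun i ↦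
      (support_mul_subset_left _ _).trans (support_cutoff_subset hR)) hm hR
  rw [show R + 2 * R = 3 * R by ring] at hbound
  refine hbound.trans_eq ?_
  rw [Real.norm_of_nonneg (by positivity)]
  ring

lemma abs_integral_pressure_mul_dilate_convolution_cutoff_le (hs : IsStokesSolution p u F)
    (hρ : IsNewtonianMollifier ρ) {C : ℝ} (hC₁ : ∀ j x, |pd ρ j x| ≤ C) (hC₂ : ∀ x, |lap ρ x| ≤ C)
    {R : ℝ} (hR : 0 < R) :
    |∫ x, p x * (dilate ρ R ⋆ divergence fun i y ↦ cutoff R y * u i y) x| ≤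
      ∑ i, ((∫ x in closedBall 0 (3 * R), |u i x|) * (∫ x in closedBall 0 (3 * R), |u i x|) *
          R⁻¹ ^ 5 * C +
        ∑ j, (∫ x in closedBall 0 (3 * R), |u i x|) * (∫ x in closedBall 0 (3 * R), |F i j x|) *
          R⁻¹ ^ 4 * C) := by
  have hu (i : Fin 3) : ContDiff ℝ 1 (u i) := (hs.contDiff_velocity i).of_le one_le_two
  have hC : 0 ≤ C := (abs_nonneg _).trans (hC₂ 0)
  have h := hs.abs_integral_pressure_mul_dilate_convolution_le hρ
    (fun i ↦ (contDiff_cutoff R).mul (hu i)) (by positivity : 0 ≤ 2 * R)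
    (fun i ↦ (support_mul_subset_left _ _).trans (support_cutoff_subset hR)) hC₁ hC₂ hR
  rw [show R + 2 * R = 3 * R by ring] at h
  have hmono (i : Fin 3) (g : R3 → ℝ) (n : ℕ) :
      R⁻¹ ^ n * C * (∫ x, |cutoff R x * u i x|) * (∫ x in closedBall 0 (3 * R), |g x|) ≤
        (∫ x in closedBall 0 (3 * R), |u i x|) * (∫ x in closedBall 0 (3 * R), |g x|) *
          R⁻¹ ^ n * C := by
    have hg : 0 ≤ ∫ x in closedBall 0 (3 * R), |g x| := integral_nonneg fun x ↦ abs_nonneg _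
    calc _ ≤ R⁻¹ ^ n * C * (∫ x in closedBall 0 (3 * R), |u i x|) *
          (∫ x in closedBall 0 (3 * R), |g x|) :=
        mul_le_mul_of_nonneg_right (mul_le_mul_of_nonneg_left
          (integral_abs_cutoff_mul_le (hu i).continuous hR) (by positivity)) hg
      _ = _ := by ring
  exact h.trans (Finset.sum_le_sum fun i _ ↦ add_le_add (hmono i _ 5)
    (Finset.sum_le_sum fun j _ ↦ hmono i _ 4))

lemma tendsto_integral_pressure_mul_dilate_convolution (hs : IsStokesSolution p u F)
    (hρ : IsNewtonianMollifier ρ) (ha : 1 / 2 < a) (ha' : a < 3)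
    (hu : ∀ i, u i =o[cobounded R3] fun x ↦ ‖x‖ ^ (-a))
    (hF : ∀ i j, F i j =O[cobounded R3] fun x ↦ ‖x‖ ^ (-(2 - a))) :
    Tendsto (fun R ↦ ∫ x, p x * (dilate ρ R ⋆ divergence fun i y ↦ cutoff R y * u i y) x)
      atTop (nhds 0) := by
  obtain ⟨C, hC₁, hC₂⟩ := exists_bound_pd_lap (contDiff_infty.1 hρ.contDiff 2)
    (hasCompactSupport_of_support_subset_closedBall hρ.support_subset)
  have hUint (i : Fin 3) : (fun R ↦ ∫ x in closedBall 0 (3 * R), |u i x|) =o[atTop]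
      fun R ↦ R ^ (3 - a) := by
    have h := isLittleO_setIntegral_closedBall_abs (μ := volume)
      (hs.contDiff_velocity i).continuous.locallyIntegrable
      (by rwa [finrank_euclideanSpace_fin]) (hu i)
    rw [finrank_euclideanSpace_fin] at h
    exact isLittleO_comp_const_mul_rpow three_pos h
  have hFint (i j : Fin 3) : (fun R ↦ ∫ x in closedBall 0 (3 * R), |F i j x|) =O[atTop]
      fun R ↦ R ^ (3 - (2 - a)) := by
    have h := isBigO_setIntegral_closedBall_abs (μ := volume)
      (hs.contDiff_stress i j).continuous.locallyIntegrable
      (by rw [finrank_euclideanSpace_fin]; push_cast; linarith) (hF i j)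
    rw [finrank_euclideanSpace_fin] at h
    exact isBigO_comp_const_mul_rpow three_pos h
  have hpos : ∀ᶠ R : ℝ in atTop, 0 < R := eventually_gt_atTop 0
  have hlim {G : ℝ → ℝ} {b : ℝ} {n : ℕ} (i : Fin 3) (hG : G =O[atTop] fun R ↦ R ^ b)
      (hb : 3 - a + b + -n ≤ 0) :
      Tendsto (fun R ↦ (∫ x in closedBall 0 (3 * R), |u i x|) * G R * R⁻¹ ^ n * C)
        atTop (nhds 0) := by
    rw [← zero_mul C]
    exact (tendsto_zero_of_isLittleO_rpow hb (isLittleO_mul_rpow hpos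
      (isLittleO_mul_rpow hpos (hUint i) hG) (isBigO_inv_pow_rpow n))).mul_const C
  refine squeeze_zero_norm' ((eventually_gt_atTop 0).mono fun R hR ↦
    hs.abs_integral_pressure_mul_dilate_convolution_cutoff_le hρ hC₁ hC₂ hR) ?_
  have hsum := tendsto_finsetSum Finset.univ fun i _ ↦
    (hlim i (hUint i).isBigO (n := 5) (by push_cast; linarith)).add
      (tendsto_finsetSum Finset.univ fun j _ ↦ hlim i (hFint i j) (n := 4) (by push_cast; linarith))
  simpa only [Finset.sum_const_zero, add_zero] using hsum

theorem tendsto_integral_pressure_mul_divergence_cutoff (hs : IsStokesSolution p u F)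
    (ha : 1 / 2 < a) (ha' : a < 3) (hu : ∀ i, u i =o[cobounded R3] fun x ↦ ‖x‖ ^ (-a))
    (hF : ∀ i j, F i j =O[cobounded R3] fun x ↦ ‖x‖ ^ (-(2 - a))) :
    Tendsto (fun R ↦ ∫ x, p x * divergence (fun i y ↦ cutoff R y * u i y) x)
      atTop (nhds 0) := by
  obtain ⟨ρ, hρ⟩ := exists_isNewtonianMollifier
  have hdiff := (hs.tendsto_integral_pressure_mul_dilate_convolution hρ ha ha' hu hF).sub
    (hs.tendsto_integral_pressure_mul_dilate_sub hρ ha hu hF)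
  rw [sub_zero] at hdiff
  refine hdiff.congr' ?_
  filter_upwards [eventually_gt_atTop 0] with R hR
  have hcont : Continuous (divergence fun i y ↦ cutoff R y * u i y) :=
    continuous_divergence fun i ↦
      (contDiff_cutoff R).mul ((hs.contDiff_velocity i).of_le one_le_two)
  have hcpt : HasCompactSupport (divergence fun i y ↦ cutoff R y * u i y) :=
    hasCompactSupport_of_support_subset_closedBall <| support_divergence_subset_closedBall fun i ↦
      (support_mul_subset_left _ _).trans (support_cutoff_subset hR)
  have hp := hs.contDiff_pressure.continuous
  have hd := hρ.hasCompactSupport_dilate hR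
  have hconv : Integrable fun x ↦
      p x * (dilate ρ R ⋆ divergence fun i y ↦ cutoff R y * u i y) x :=
    integrable_mul_of_hasCompactSupport hp
      (hd.continuous_convolution_left _ (hρ.continuous_dilate R) hcont.locallyIntegrable)
      (hd.convolution _ hcpt)
  simp only [mul_sub]
  rw [integral_sub hconv (integrable_mul_of_hasCompactSupport hp hcont hcpt), sub_sub_cancel]

end IsStokesSolution

end PressureFlux

section Energy

/-- The energy density `(|u|² + |v|² + θ²) / 2` of a state `(u, v, θ)`. -/
def energyDensity (u v : R3 → R3) (θ : R3 → ℝ) (x : R3) : ℝ :=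
  (‖u x‖ ^ 2 + ‖v x‖ ^ 2 + θ x ^ 2) / 2

/-- The dissipation `|∇u|² + |∇v|² + |∇θ|²` of a state `(u, v, θ)`. -/
def dissipation (u v : R3 → R3) (θ : R3 → ℝ) (x : R3) : ℝ :=
  (∑ i, ∑ j, (pd (fun y ↦ u y i) j x ^ 2 + pd (fun y ↦ v y i) j x ^ 2)) + ∑ j, pd θ j x ^ 2

/-- The part of the energy flux that does not involve the pressure: the vector field
`H u + (u·v + θ) v`, where `H` is the energy density. -/
def energyFlux (u v : R3 → R3) (θ : R3 → ℝ) (j : Fin 3) (x : R3) : ℝ :=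
  u x j * energyDensity u v θ x + (inner ℝ (u x) (v x) + θ x) * v x j

variable {u v : R3 → R3} {p θ : R3 → ℝ}

lemma contDiff_energyDensity {n : WithTop ℕ∞} (hu : ContDiff ℝ n u) (hv : ContDiff ℝ n v)
    (hθ : ContDiff ℝ n θ) : ContDiff ℝ n (energyDensity u v θ) :=
  (((hu.norm_sq ℝ).add (hv.norm_sq ℝ)).add (hθ.pow 2)).div_const 2

lemma contDiff_energyFlux {n : WithTop ℕ∞} (hu : ContDiff ℝ n u) (hv : ContDiff ℝ n v)
    (hθ : ContDiff ℝ n θ) (j : Fin 3) : ContDiff ℝ n (energyFlux u v θ j) :=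
  ((contDiff_euclidean.1 hu j).mul (contDiff_energyDensity hu hv hθ)).add
    (((hu.inner ℝ hv).add hθ).mul (contDiff_euclidean.1 hv j))

lemma dissipation_nonneg (u v : R3 → R3) (θ : R3 → ℝ) (x : R3) : 0 ≤ dissipation u v θ x := by
  unfold dissipation
  positivity

lemma continuous_dissipation (hu : ContDiff ℝ 1 u) (hv : ContDiff ℝ 1 v) (hθ : ContDiff ℝ 1 θ) :
    Continuous (dissipation u v θ) := by
  have hu' (i : Fin 3) := continuous_pd (contDiff_euclidean.1 hu i)
  have hv' (i : Fin 3) := continuous_pd (contDiff_euclidean.1 hv i)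
  have hθ' := continuous_pd hθ
  unfold dissipation
  fun_prop

lemma pd_eq_zero_of_dissipation_eq_zero (h : ∀ x, dissipation u v θ x = 0) (j : Fin 3) (x : R3) :
    (∀ i, pd (fun y ↦ u y i) j x = 0) ∧ (∀ i, pd (fun y ↦ v y i) j x = 0) ∧ pd θ j x = 0 := by
  have hx := h x
  rw [dissipation, add_eq_zero_iff_of_nonneg (by positivity) (by positivity),
    Finset.sum_eq_zero_iff_of_nonneg fun i _ ↦ by positivity,
    Finset.sum_eq_zero_iff_of_nonneg fun i _ ↦ by positivity] at hx
  have huv (i : Fin 3) :=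
    (Finset.sum_eq_zero_iff_of_nonneg fun j _ ↦ by positivity).1 (hx.1 i (Finset.mem_univ i)) j
      (Finset.mem_univ j)
  have huv' (i : Fin 3) :=
    (add_eq_zero_iff_of_nonneg (by positivity : (0 : ℝ) ≤ _ ^ 2) (by positivity)).1 (huv i)
  exact ⟨fun i ↦ sq_eq_zero_iff.1 (huv' i).1, fun i ↦ sq_eq_zero_iff.1 (huv' i).2,
    sq_eq_zero_iff.1 (hx.2 j (Finset.mem_univ j))⟩

lemma pd_inner (hu : Differentiable ℝ u) (hv : Differentiable ℝ v) (j : Fin 3) :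
    pd (fun x ↦ inner ℝ (u x) (v x)) j =
      fun x ↦ ∑ i, (u x i * pd (fun y ↦ v y i) j x + v x i * pd (fun y ↦ u y i) j x) := by
  have hu' := differentiable_euclidean.1 hu
  have hv' := differentiable_euclidean.1 hv
  simp only [PiLp.inner_apply, RCLike.inner_apply, conj_trivial]
  rw [pd_sum _ fun i ↦ (hv' i).fun_mul (hu' i)]
  simp only [pd_mul (hv' _) (hu' _), add_comm]

lemma pd_energyDensity (hu : Differentiable ℝ u) (hv : Differentiable ℝ v)
    (hθ : Differentiable ℝ θ) (j : Fin 3) :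
    pd (energyDensity u v θ) j = fun x ↦
      (∑ i, (u x i * pd (fun y ↦ u y i) j x + v x i * pd (fun y ↦ v y i) j x)) +
        θ x * pd θ j x := by
  have hdensity : energyDensity u v θ = fun x ↦
      (1 / 2) * (inner ℝ (u x) (u x) + inner ℝ (v x) (v x) + θ x * θ x) := by
    funext x
    rw [energyDensity, real_inner_self_eq_norm_sq, real_inner_self_eq_norm_sq]
    ring
  rw [hdensity, pd_const_mul (((hu.inner ℝ hu).fun_add (hv.inner ℝ hv)).fun_add (hθ.fun_mul hθ)),
    pd_add ((hu.inner ℝ hu).fun_add (hv.inner ℝ hv)) (hθ.fun_mul hθ),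
    pd_add (hu.inner ℝ hu) (hv.inner ℝ hv), pd_inner hu hu, pd_inner hv hv, pd_mul hθ hθ]
  funext x
  simp only [Fin.sum_univ_three]
  ring

lemma lap_energyDensity (hu : ContDiff ℝ 2 u) (hv : ContDiff ℝ 2 v) (hθ : ContDiff ℝ 2 θ)
    (x : R3) :
    lap (energyDensity u v θ) x = dissipation u v θ x +
      (∑ i, (u x i * lap (fun y ↦ u y i) x + v x i * lap (fun y ↦ v y i) x)) + θ x * lap θ x := by
  have hdiff {f : R3 → ℝ} (hf : ContDiff ℝ 2 f) : Differentiable ℝ f :=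
    hf.differentiable two_ne_zero
  have hpd {f : R3 → ℝ} (hf : ContDiff ℝ 2 f) (j : Fin 3) : Differentiable ℝ (pd f j) :=
    (contDiff_pd (m := 1) hf (by norm_num) j).differentiable one_ne_zero
  have hu' := contDiff_euclidean.1 hu
  have hv' := contDiff_euclidean.1 hv
  have hsum (j i : Fin 3) : Differentiable ℝ fun x ↦
      u x i * pd (fun y ↦ u y i) j x + v x i * pd (fun y ↦ v y i) j x :=
    ((hdiff (hu' i)).fun_mul (hpd (hu' i) j)).fun_add ((hdiff (hv' i)).fun_mul (hpd (hv' i) j))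
  simp only [lap, dissipation, pd_energyDensity (hu.differentiable two_ne_zero)
    (hv.differentiable two_ne_zero) (hdiff hθ),
    pd_add (Differentiable.fun_sum fun i _ ↦ hsum _ i) ((hdiff hθ).fun_mul (hpd hθ _)),
    pd_sum _ (hsum _), pd_add ((hdiff (hu' _)).fun_mul (hpd (hu' _) _))
      ((hdiff (hv' _)).fun_mul (hpd (hv' _) _)), pd_mul (hdiff (hu' _)) (hpd (hu' _) _),
    pd_mul (hdiff (hv' _)) (hpd (hv' _) _), pd_mul (hdiff hθ) (hpd hθ _)]
  simp only [Fin.sum_univ_three]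
  ring

lemma pd_energyFlux (hu : ContDiff ℝ 1 u) (hv : ContDiff ℝ 1 v) (hθ : ContDiff ℝ 1 θ)
    (j : Fin 3) :
    pd (energyFlux u v θ j) j = fun x ↦
      u x j * pd (energyDensity u v θ) j x + energyDensity u v θ x * pd (fun y ↦ u y j) j x +
      ((inner ℝ (u x) (v x) + θ x) * pd (fun y ↦ v y j) j x +
        v x j * ((∑ i, (u x i * pd (fun y ↦ v y i) j x + v x i * pd (fun y ↦ u y i) j x)) +
          pd θ j x)) := by
  have hu' := hu.differentiable one_ne_zero
  have hv' := hv.differentiable one_ne_zero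
  have hθ' := hθ.differentiable one_ne_zero
  have huj := differentiable_euclidean.1 hu' j
  have hvj := differentiable_euclidean.1 hv' j
  have hH := (contDiff_energyDensity hu hv hθ).differentiable one_ne_zero
  unfold energyFlux
  rw [pd_add (huj.fun_mul hH) (((hu'.inner ℝ hv').fun_add hθ').fun_mul hvj), pd_mul huj hH,
    pd_mul ((hu'.inner ℝ hv').fun_add hθ') hvj, pd_add (hu'.inner ℝ hv') hθ', pd_inner hu' hv']

namespace TCM

lemma isStokesSolution (h : TCM u v p θ) (hu : ContDiff ℝ 2 u) (hv : ContDiff ℝ 2 v)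
    (hp : ContDiff ℝ 1 p) :
    IsStokesSolution p (fun i x ↦ u x i) fun i j x ↦ u x j * u x i + v x j * v x i := by
  obtain ⟨hmomentum, -, -, hdiv⟩ := h
  have hu' (i : Fin 3) : ContDiff ℝ 1 fun x ↦ u x i :=
    (contDiff_euclidean.1 hu i).of_le one_le_two
  have hv' (i : Fin 3) : ContDiff ℝ 1 fun x ↦ v x i :=
    (contDiff_euclidean.1 hv i).of_le one_le_two
  have hdu (i : Fin 3) := (hu' i).differentiable one_ne_zero
  have hdv (i : Fin 3) := (hv' i).differentiable one_ne_zero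
  refine ⟨hp, contDiff_euclidean.1 hu, fun i j ↦ ((hu' j).mul (hu' i)).add ((hv' j).mul (hv' i)),
    fun i x ↦ ?_, hdiv⟩
  simp only [pd_add ((hdu _).fun_mul (hdu _)) ((hdv _).fun_mul (hdv _)), pd_mul (hdu _) (hdu _),
    Finset.sum_add_distrib, ← Finset.mul_sum, hdiv, mul_zero, add_zero]
  linarith [hmomentum i x]

lemma dissipation_eq (h : TCM u v p θ) (hu : ContDiff ℝ 2 u) (hv : ContDiff ℝ 2 v)
    (hθ : ContDiff ℝ 2 θ) (x : R3) :
    dissipation u v θ x = lap (energyDensity u v θ) x - divergence (energyFlux u v θ) x -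
      ∑ j, u x j * pd p j x := by
  obtain ⟨hmomentum, hbaroclinic, htemperature, hdiv⟩ := h
  have hv' := differentiable_euclidean.1 (hv.differentiable two_ne_zero)
  have e₁ (i : Fin 3) := hmomentum i x
  have e₂ (i : Fin 3) := hbaroclinic i x
  have e₃ := htemperature x
  have e₄ := hdiv x
  simp only [pd_mul (hv' _) (hv' _)] at e₁
  rw [lap_energyDensity hu hv hθ]
  simp only [divergence, pd_energyFlux (hu.of_le one_le_two) (hv.of_le one_le_two)
    (hθ.of_le one_le_two), pd_energyDensity (hu.differentiable two_ne_zero)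
    (hv.differentiable two_ne_zero) (hθ.differentiable two_ne_zero),
    PiLp.inner_apply, RCLike.inner_apply, conj_trivial]
  simp only [Fin.sum_univ_three] at e₁ e₂ e₃ e₄ ⊢
  linear_combination u x 0 * e₁ 0 + u x 1 * e₁ 1 + u x 2 * e₁ 2 + v x 0 * e₂ 0 + v x 1 * e₂ 1 +
    v x 2 * e₂ 2 + θ x * e₃ + energyDensity u v θ x * e₄

theorem integral_dissipation_mul (h : TCM u v p θ) (hu : ContDiff ℝ 2 u) (hv : ContDiff ℝ 2 v)
    (hp : ContDiff ℝ 1 p) (hθ : ContDiff ℝ 2 θ) {φ : R3 → ℝ} (hφ : ContDiff ℝ 2 φ)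
    (hc : HasCompactSupport φ) :
    ∫ x, dissipation u v θ x * φ x =
      (∫ x, energyDensity u v θ x * lap φ x) + (∑ j, ∫ x, energyFlux u v θ j x * pd φ j x) +
        ∫ x, p x * divergence (fun j y ↦ φ y * u y j) x := by
  have hH := contDiff_energyDensity hu hv hθ
  have hW (j : Fin 3) : ContDiff ℝ 1 (energyFlux u v θ j) :=
    (contDiff_energyFlux hu hv hθ j).of_le one_le_two
  have hφ1 : ContDiff ℝ 1 φ := hφ.of_le one_le_two
  have hφu (j : Fin 3) : ContDiff ℝ 1 fun x ↦ φ x * u x j :=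
    hφ1.mul ((contDiff_euclidean.1 hu j).of_le one_le_two)
  have hφuc (j : Fin 3) : HasCompactSupport fun x ↦ φ x * u x j := hc.mul_right
  have hpressure (j : Fin 3) : Integrable fun x ↦ pd p j x * (φ x * u x j) :=
    integrable_mul_of_hasCompactSupport (continuous_pd hp j) (hφu j).continuous (hφuc j)
  have hdiffusion : Integrable fun x ↦ lap (energyDensity u v θ) x * φ x :=
    integrable_mul_of_hasCompactSupport (continuous_lap hH) hφ.continuous hc
  have htransport : Integrable fun x ↦ divergence (energyFlux u v θ) x * φ x :=
    integrable_mul_of_hasCompactSupport (continuous_divergence hW) hφ.continuous hc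
  calc ∫ x, dissipation u v θ x * φ x
      = ∫ x, (lap (energyDensity u v θ) x * φ x - divergence (energyFlux u v θ) x * φ x -
          ∑ j, pd p j x * (φ x * u x j)) := by
        simp only [h.dissipation_eq hu hv hθ, sub_mul, Finset.sum_mul]
        congr! 4
        ring
    _ = (∫ x, lap (energyDensity u v θ) x * φ x) - (∫ x, divergence (energyFlux u v θ) x * φ x) -
          ∑ j, ∫ x, pd p j x * (φ x * u x j) := by
        rw [integral_sub (hdiffusion.sub' htransport)
            (integrable_finsetSum _ fun j _ ↦ hpressure j),
          integral_sub hdiffusion htransport, integral_finsetSum _ fun j _ ↦ hpressure j]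
    _ = _ := by
        rw [integral_mul_lap hH hφ hc, sum_integral_mul_pd hW hφ1 hc,
          integral_mul_divergence hp hφu hφuc]
        ring

end TCM

end Energy

section Liouville

lemma eq_zero_of_tendsto_integral_mul_cutoff {D : R3 → ℝ} (hD : Continuous D) (hD0 : ∀ x, 0 ≤ D x)
    (h : Tendsto (fun R ↦ ∫ x, D x * cutoff R x) atTop (nhds 0)) (x : R3) : D x = 0 := by
  by_contra hx
  have hint {R : ℝ} (hR : 0 < R) : Integrable fun y ↦ D y * cutoff R y :=
    integrable_mul_of_hasCompactSupport hD (contDiff_cutoff (n := 0) R).continuous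
      (hasCompactSupport_cutoff hR)
  have hρ : 0 < ‖x‖ + 1 := by positivity
  have hpos : 0 < ∫ y, D y * cutoff (‖x‖ + 1) y :=
    Continuous.integral_pos_of_hasCompactSupport_nonneg_nonzero
      (hD.mul (contDiff_cutoff (n := 0) _).continuous) (hasCompactSupport_cutoff hρ).mul_left
      (fun y ↦ mul_nonneg (hD0 y) (cutoff_nonneg _ y))
      (x := x) (by rwa [cutoff_eq_one hρ (by linarith), mul_one])
  refine hpos.not_ge (ge_of_tendsto h ?_)
  filter_upwards [eventually_ge_atTop (2 * (‖x‖ + 1))] with R hR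
  have hR0 : 0 < R := by linarith
  refine integral_mono (hint hρ) (hint hR0) fun y ↦ mul_le_mul_of_nonneg_left ?_ (hD0 y)
  by_cases hy : y ∈ support (cutoff (‖x‖ + 1))
  · rw [cutoff_eq_one hR0 ((mem_closedBall_zero_iff.1 (support_cutoff_subset hρ hy)).trans hR)]
    exact cutoff_le_one _ y
  · rw [notMem_support.1 hy]
    exact cutoff_nonneg R y

lemma eq_zero_of_pd_eq_zero {f : R3 → ℝ} (hf : Differentiable ℝ f) (hpd : ∀ j x, pd f j x = 0)
    (hlim : Tendsto f (cobounded R3) (nhds 0)) (x : R3) : f x = 0 := by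
  have hfderiv (y : R3) : fderiv ℝ f y = 0 :=
    ContinuousLinearMap.coe_injective <| (EuclideanSpace.basisFun (Fin 3) ℝ).toBasis.ext
      fun j ↦ by simpa [pd] using hpd j y
  have hconst : f = fun _ ↦ f x := funext fun y ↦ is_const_of_fderiv_eq_zero hf hfderiv y x
  rw [hconst] at hlim
  exact tendsto_nhds_unique tendsto_const_nhds hlim

lemma tendsto_integral_mul_lap_cutoff {f : R3 → ℝ}
    (hf : f =o[cobounded R3] fun x ↦ ‖x‖ ^ (-1 : ℝ)) :
    Tendsto (fun R ↦ ∫ x, f x * lap (cutoff R) x) atTop (nhds 0) := by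
  have hint : Integrable (lap unitCutoff) :=
    (continuous_lap unitCutoff.contDiff).integrable_of_hasCompactSupport
      (hasCompactSupport_lap unitCutoff.hasCompactSupport)
  have h := isLittleO_mul_rpow (eventually_gt_atTop 0) (isLittleO_integral_mul_comp_smul volume hf
    zero_le_one (fun x ↦ lap_unitCutoff_eq_zero) hint) (isBigO_inv_pow_rpow 2)
  rw [finrank_euclideanSpace_fin] at h
  refine tendsto_zero_of_isLittleO_rpow (by norm_num) (h.congr_left fun R ↦ ?_)
  rw [lap_cutoff, ← integral_mul_const]
  exact integral_congr_ae (ae_of_all _ fun x ↦ by ring)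

lemma tendsto_integral_mul_pd_cutoff {f : R3 → ℝ}
    (hf : f =o[cobounded R3] fun x ↦ ‖x‖ ^ (-2 : ℝ)) (j : Fin 3) :
    Tendsto (fun R ↦ ∫ x, f x * pd (cutoff R) j x) atTop (nhds 0) := by
  have hint : Integrable (pd unitCutoff j) :=
    (continuous_pd unitCutoff.contDiff j).integrable_of_hasCompactSupport
      (hasCompactSupport_pd unitCutoff.hasCompactSupport j)
  have h := isLittleO_mul_rpow (eventually_gt_atTop 0) (isLittleO_integral_mul_comp_smul volume hf
    zero_le_two (fun x ↦ pd_unitCutoff_eq_zero j) hint) (isBigO_inv_pow_rpow 1)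
  rw [finrank_euclideanSpace_fin] at h
  refine tendsto_zero_of_isLittleO_rpow (by norm_num) (h.congr_left fun R ↦ ?_)
  rw [pd_cutoff, ← integral_mul_const]
  exact integral_congr_ae (ae_of_all _ fun x ↦ by ring)

variable {u v : R3 → R3} {p θ : R3 → ℝ} {a : ℝ}

lemma isBigO_energyDensity (hu : u =O[cobounded R3] fun x ↦ ‖x‖ ^ a)
    (hv : v =O[cobounded R3] fun x ↦ ‖x‖ ^ a) (hθ : θ =O[cobounded R3] fun x ↦ ‖x‖ ^ a) :
    energyDensity u v θ =O[cobounded R3] fun x ↦ ‖x‖ ^ (a + a) := by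
  have hsum := ((isBigO_mul_rpow eventually_norm_pos hu.norm_left hu.norm_left).add
    (isBigO_mul_rpow eventually_norm_pos hv.norm_left hv.norm_left)).add
    (isBigO_mul_rpow eventually_norm_pos hθ hθ)
  refine (hsum.const_mul_left (1 / 2)).congr_left fun x ↦ ?_
  rw [energyDensity]
  ring

lemma isLittleO_energyFlux (ha : a < 0) (hu : u =o[cobounded R3] fun x ↦ ‖x‖ ^ a)
    (hv : v =O[cobounded R3] fun x ↦ ‖x‖ ^ a) (hθ : θ =o[cobounded R3] fun x ↦ ‖x‖ ^ (a + a))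
    (j : Fin 3) : energyFlux u v θ j =o[cobounded R3] fun x ↦ ‖x‖ ^ (a + a + a) := by
  have hθ' : θ =O[cobounded R3] fun x ↦ ‖x‖ ^ a :=
    (hθ.trans (isLittleO_norm_rpow_norm_rpow (by linarith))).isBigO
  have hinner : (fun x ↦ inner ℝ (u x) (v x)) =o[cobounded R3] fun x ↦ ‖x‖ ^ (a + a) :=
    (isBigO_of_le _ fun x ↦ by simpa using norm_inner_le_norm (𝕜 := ℝ) (u x) (v x)).trans_isLittleO
      (isLittleO_mul_rpow eventually_norm_pos hu.norm_left hv.norm_left)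
  have hadvection := isLittleO_mul_rpow eventually_norm_pos
    ((isBigO_apply _ u j).trans_isLittleO hu) (isBigO_energyDensity hu.isBigO hv hθ')
  have hbaroclinic := isLittleO_mul_rpow eventually_norm_pos (hinner.add hθ)
    ((isBigO_apply _ v j).trans hv)
  rw [← add_assoc] at hadvection
  exact hadvection.add hbaroclinic

theorem TCM.tendsto_integral_dissipation_mul_cutoff (h : TCM u v p θ) (hu : ContDiff ℝ 2 u)
    (hv : ContDiff ℝ 2 v) (hp : ContDiff ℝ 1 p) (hθ : ContDiff ℝ 2 θ)
    (hu_decay : u =o[cobounded R3] fun x ↦ ‖x‖ ^ (-(2 / 3) : ℝ))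
    (hv_decay : v =O[cobounded R3] fun x ↦ ‖x‖ ^ (-(2 / 3) : ℝ))
    (hθ_decay : θ =o[cobounded R3] fun x ↦ ‖x‖ ^ (-(4 / 3) : ℝ)) :
    Tendsto (fun R ↦ ∫ x, dissipation u v θ x * cutoff R x) atTop (nhds 0) := by
  have hdensity : energyDensity u v θ =o[cobounded R3] fun x ↦ ‖x‖ ^ (-1 : ℝ) :=
    (isBigO_energyDensity hu_decay.isBigO hv_decay (hθ_decay.trans
      (isLittleO_norm_rpow_norm_rpow (by norm_num))).isBigO).trans_isLittleO
        (isLittleO_norm_rpow_norm_rpow (by norm_num))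
  have hflux (j : Fin 3) : energyFlux u v θ j =o[cobounded R3] fun x ↦ ‖x‖ ^ (-2 : ℝ) := by
    rw [show (-(4 / 3) : ℝ) = -(2 / 3) + -(2 / 3) by norm_num] at hθ_decay
    rw [show (-2 : ℝ) = -(2 / 3) + -(2 / 3) + -(2 / 3) by norm_num]
    exact isLittleO_energyFlux (by norm_num) hu_decay hv_decay hθ_decay j
  have hstress (i j : Fin 3) : (fun x ↦ u x j * u x i + v x j * v x i) =O[cobounded R3]
      fun x ↦ ‖x‖ ^ (-(2 - 2 / 3) : ℝ) := by
    have hu_apply (i : Fin 3) := (isBigO_apply _ u i).trans hu_decay.isBigO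
    have hv_apply (i : Fin 3) := (isBigO_apply _ v i).trans hv_decay
    rw [show (-(2 - 2 / 3) : ℝ) = -(2 / 3) + -(2 / 3) by norm_num]
    exact (isBigO_mul_rpow eventually_norm_pos (hu_apply j) (hu_apply i)).add
      (isBigO_mul_rpow eventually_norm_pos (hv_apply j) (hv_apply i))
  have hpressure := (h.isStokesSolution hu hv hp).tendsto_integral_pressure_mul_divergence_cutoff
    (by norm_num) (by norm_num) (fun i ↦ (isBigO_apply _ u i).trans_isLittleO hu_decay) hstress
  have hsum := ((tendsto_integral_mul_lap_cutoff hdensity).add (tendsto_finsetSum Finset.univ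
    fun j _ ↦ tendsto_integral_mul_pd_cutoff (hflux j) j)).add hpressure
  simp only [Finset.sum_const_zero, add_zero] at hsum
  refine hsum.congr' ((eventually_gt_atTop 0).mono fun R hR ↦ ?_)
  exact (h.integral_dissipation_mul hu hv hp hθ (contDiff_cutoff R)
    (hasCompactSupport_cutoff hR)).symm

theorem liouville_tcm_C1_general (h : TCM u v p θ) (hu : ContDiff ℝ 2 u)
    (hv : ContDiff ℝ 2 v) (hp : ContDiff ℝ 1 p) (hθ : ContDiff ℝ 2 θ)
    (hu_decay : u =o[cobounded R3] fun x ↦ ‖x‖ ^ (-(2 / 3) : ℝ))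
    (hv_decay : v =O[cobounded R3] fun x ↦ ‖x‖ ^ (-(2 / 3) : ℝ))
    (hθ_decay : θ =o[cobounded R3] fun x ↦ ‖x‖ ^ (-(4 / 3) : ℝ)) :
    (∀ x, u x = 0) ∧ (∀ x, v x = 0) ∧ (∀ x, θ x = 0) := by
  have hdissipation := eq_zero_of_tendsto_integral_mul_cutoff
    (continuous_dissipation (hu.of_le one_le_two) (hv.of_le one_le_two) (hθ.of_le one_le_two))
    (dissipation_nonneg u v θ)
    (h.tendsto_integral_dissipation_mul_cutoff hu hv hp hθ hu_decay hv_decay hθ_decay)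
  have hpd := pd_eq_zero_of_dissipation_eq_zero hdissipation
  have hrpow {c : ℝ} (hc : 0 < c) : Tendsto (fun x : R3 ↦ ‖x‖ ^ (-c)) (cobounded R3) (nhds 0) :=
    (tendsto_rpow_neg_atTop hc).comp tendsto_norm_cobounded_atTop
  have hlim {w : R3 → R3} (hw : w =O[cobounded R3] fun x ↦ ‖x‖ ^ (-(2 / 3) : ℝ)) (i : Fin 3) :
      Tendsto (fun x ↦ w x i) (cobounded R3) (nhds 0) :=
    ((isBigO_apply _ w i).trans hw).trans_tendsto (hrpow (by norm_num))
  refine ⟨fun x ↦ ?_, fun x ↦ ?_, fun x ↦ ?_⟩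
  · ext i
    exact eq_zero_of_pd_eq_zero
      (differentiable_euclidean.1 (hu.differentiable two_ne_zero) i) (fun j y ↦ (hpd j y).1 i)
      (hlim hu_decay.isBigO i) x
  · ext i
    exact eq_zero_of_pd_eq_zero
      (differentiable_euclidean.1 (hv.differentiable two_ne_zero) i) (fun j y ↦ (hpd j y).2.1 i)
      (hlim hv_decay i) x
  · exact eq_zero_of_pd_eq_zero (hθ.differentiable two_ne_zero) (fun j y ↦ (hpd j y).2.2)
      (hθ_decay.trans_tendsto (hrpow (by norm_num))) x

end Liouville

theorem liouville_tcm_C1 (u v : R3 → R3) (pr θ : R3 → ℝ)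
    (hu : ContDiff ℝ (⊤ : ℕ∞) u) (hv : ContDiff ℝ (⊤ : ℕ∞) v)
    (hpr : ContDiff ℝ (⊤ : ℕ∞) pr) (hθ : ContDiff ℝ (⊤ : ℕ∞) θ)
    (hsol : TCM u v pr θ)
    (hu_decay : ∀ ε > 0, ∃ K : ℝ, ∀ x : R3, K ≤ ‖x‖ → ‖x‖ ^ (2 / 3 : ℝ) * ‖u x‖ < ε)
    (hv_decay : ∃ M K : ℝ, 0 < M ∧ 0 < K ∧ ∀ x : R3, K ≤ ‖x‖ → ‖x‖ ^ (2 / 3 : ℝ) * ‖v x‖ ≤ M)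
    (hθ_decay : ∀ ε > 0, ∃ K : ℝ, ∀ x : R3, K ≤ ‖x‖ → ‖x‖ ^ (4 / 3 : ℝ) * |θ x| < ε) :
    (∀ x, u x = 0) ∧ (∀ x, v x = 0) ∧ (∀ x, θ x = 0) :=
  let ⟨_, _, _, _, hv_bound⟩ := hv_decay
  liouville_tcm_C1_general hsol (contDiff_infty.1 hu 2) (contDiff_infty.1 hv 2)
    (contDiff_infty.1 hpr 1) (contDiff_infty.1 hθ 2) (isLittleO_norm_rpow_neg hu_decay)
    (isBigOWith_norm_rpow_neg hv_bound).isBigO (isLittleO_norm_rpow_neg hθ_decay)
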